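/- Let (Ω, 𝓕, 𝔽, P) satisfy the usual conditions and let 0 < L < U be constants. Let ν be a discrete probability measure on ℝ with ν({0}) = 0 and ∫_ℝ |ξ| ν(dξ) < ∞; let Atom(ν) be its (countable) set of atoms and FS(Atom(ν)) the countable set of all finite sums (including the empty sum 0) of elements of Atom(ν). Let η be a progressively measurable process with L ≤ η ≤ U (P ⊗ dt)-a.e., satisfying: there exist α ∈ (0,1] and, for each T > 0, a constant C_T > 0 with E[|η_t − η_s|] ≤ C_T|t − s|^α for all s, t ∈ [0,T]. Let λ : [0,∞) × FS(Atom(ν)) → [0,∞) be measurable with L ≤ λ(·, x) ≤ U Lebesgue-a.e. for each x. Suppose Ω supports i.i.d. Exp(1) random variables (E_k)_{k≥1} and i.i.d. ν-distributed random variables (J_k)_{k≥1} such that 𝓕_∞, (E_k), (J_k) are independent. Then there exist a filtration 𝔾 ⊇ 𝔽 satisfying the usual conditions and finite 𝔾-stopping times 0 = τ_0 < τ_1 < τ_2 < ⋯ increasing to ∞ P-a.s., such that the pure jump process X_t := Σ_{k=1}^∞ J_k·1_{{τ_k ≤ t}} is well-defined, starts at 0, is 𝔾-adapted, takes values in FS(Atom(ν)),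 and for every measurable h : ℝ → ℝ with h(J_1) integrable, the process Σ_{k=1}^∞ h(J_k)·1_{{τ_k ≤ t}} − (∫_ℝ h(ξ) ν(dξ)) · ∫_0^t (η_s / E[η_s | X_{s−}]) λ(s, X_{s−}) ds, t ≥ 0, is a 𝔾-martingale. (Equivalently, the jump measure of X has 𝔾-compensator (η_t / E[η_t | X_{t−}]) λ(t, X_{t−}) ν(dξ) dt.) -/

import Mathlib

open MeasureTheory ProbabilityTheory Filter Set
open scoped ENNReal Topology

noncomputable section

namespace InvMarkovJump

variable {Ω : Type*}

/-- `F` is a filtration (for times `t ≥ 0`) of sub-σ-algebras of `m0`. -/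
def IsFiltration (m0 : MeasurableSpace Ω) (F : ℝ → MeasurableSpace Ω) : Prop :=
  (∀ s t : ℝ, 0 ≤ s → s ≤ t → F s ≤ F t) ∧ ∀ t : ℝ, F t ≤ m0

/-- The right-continuous regularization `(⋂_{s > t} F s)_{t ≥ 0}` of a filtration. -/
def rcReg (F : ℝ → MeasurableSpace Ω) : ℝ → MeasurableSpace Ω :=
  fun t => ⨅ s ∈ Set.Ioi t, F s

/-- All sample paths of `M` are right-continuous (at every time `t ≥ 0`). -/
def RCPaths (M : ℝ → Ω → ℝ) : Prop :=
  ∀ ω, ∀ t : ℝ, 0 ≤ t → ContinuousWithinAt (fun s => M s ω) (Set.Ici t) t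

/-- `M` is a martingale (for times `t ≥ 0`) with respect to the filtration `F`
under the measure `μ`: it is adapted, integrable, and `E[M_t | F_s] = M_s` a.s.
for all `0 ≤ s ≤ t`. -/
def IsMartingale {m0 : MeasurableSpace Ω} (μ : Measure Ω)
    (F : ℝ → MeasurableSpace Ω) (M : ℝ → Ω → ℝ) : Prop :=
  (∀ t : ℝ, 0 ≤ t → Integrable (M t) μ) ∧
  (∀ t : ℝ, 0 ≤ t → Measurable[F t] (M t)) ∧
  ∀ s t : ℝ, 0 ≤ s → s ≤ t → μ[M t|F s] =ᵐ[μ] M s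

/-- `F` is immersed in `G`: `F ⊆ G` and every `F`-martingale (with right-continuous
sample paths) is a `G`-martingale. -/
def Immersed {m0 : MeasurableSpace Ω} (μ : Measure Ω)
    (F G : ℝ → MeasurableSpace Ω) : Prop :=
  (∀ t : ℝ, 0 ≤ t → F t ≤ G t) ∧
  ∀ M : ℝ → Ω → ℝ, RCPaths M → IsMartingale μ F M → IsMartingale μ G M

/-- The usual conditions: the filtration is right-continuous and `F 0` contains
all `μ`-null sets. -/
def UsualConditions {m0 : MeasurableSpace Ω} (μ : Measure Ω)
    (F : ℝ → MeasurableSpace Ω) : Prop :=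
  IsFiltration m0 F ∧ (∀ t : ℝ, 0 ≤ t → F t = rcReg F t) ∧
    ∀ s : Set Ω, μ s = 0 → MeasurableSet[F 0] s

/-- `E` is `Exp(1)`-distributed: `P(E > x) = e^{-x}` for all `x ≥ 0`. -/
def IsExpOne {m0 : MeasurableSpace Ω} (μ : Measure Ω) (E : Ω → ℝ) : Prop :=
  Measurable E ∧ ∀ x : ℝ, 0 ≤ x → μ {ω | x < E ω} = ENNReal.ofReal (Real.exp (-x))

/-- `F_∞ = ⋁_{t ≥ 0} F t`. -/
def Finfty (F : ℝ → MeasurableSpace Ω) : MeasurableSpace Ω :=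
  ⨆ t ∈ Set.Ici (0:ℝ), F t

/-- The natural filtration `(σ(Y_s : 0 ≤ s ≤ t))_{t ≥ 0}` of a process `Y`. -/
def natFilt {β : Type*} [MeasurableSpace β] (Y : ℝ → Ω → β) : ℝ → MeasurableSpace Ω :=
  fun t => ⨆ s ∈ Set.Icc (0:ℝ) t, MeasurableSpace.comap (Y s) inferInstance

/-- Progressive measurability of a process `u` with respect to the filtration `F`:
for every `t ≥ 0`, `(s, ω) ↦ u s ω` on `[0, t] × Ω` is `B([0,t]) ⊗ F t`-measurable. -/
def ProgMeas (F : ℝ → MeasurableSpace Ω) (u : ℝ → Ω → ℝ) : Prop :=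
  ∀ t : ℝ, 0 ≤ t →
    Measurable[MeasurableSpace.prod inferInstance (F t)]
      (fun p : Set.Icc (0:ℝ) t × Ω => u p.1 p.2)

/-- The set of atoms of a measure `ν` on `ℝ`. -/
def atomSet (ν : Measure ℝ) : Set ℝ := {x : ℝ | ν {x} ≠ 0}

/-- `ν` is a discrete probability measure: it is carried by a countable set. -/
def IsDiscrete (ν : Measure ℝ) : Prop := ∃ S : Set ℝ, S.Countable ∧ ν Sᶜ = 0

/-- `FS A`: the set of all finite sums (including the empty sum `0`) of elements of `A`. -/
def FS (A : Set ℝ) : Set ℝ :=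
  {x : ℝ | ∃ (k : ℕ) (a : Fin k → ℝ), (∀ i, a i ∈ A) ∧ x = ∑ i, a i}

/-- The pure jump process `X_t = Σ_{k ≥ 1} J_k·1_{τ_k ≤ t}`. -/
def jumpX (τ : ℕ → Ω → ℝ) (J : ℕ → Ω → ℝ) (t : ℝ) (ω : Ω) : ℝ :=
  ∑' k : ℕ, if τ (k + 1) ω ≤ t then J k ω else 0

/-- The left limit `X_{t-} = Σ_{k ≥ 1} J_k·1_{τ_k < t}`. -/
def jumpXminus (τ : ℕ → Ω → ℝ) (J : ℕ → Ω → ℝ) (t : ℝ) (ω : Ω) : ℝ :=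
  ∑' k : ℕ, if τ (k + 1) ω < t then J k ω else 0

/-!
Freeze `F_∞` and the jump sizes. The process then only counts its jumps, and the unknown is the
conditional probability `f (s, ω, k)` of exactly `k` jumps before time `s`. Since the position after
`k` jumps is a partial sum of the jump sizes, `f` determines the ratios
`E[η_s; X_{s-} = x] / P(X_{s-} = x)`, so `f` has to solve a forward equation whose intensity depends
on `f` itself. The forward operator is a contraction for an exponentially weighted `L¹` distance,
because multiplying a ratio by the mass `f` gives to its site leaves an expression that is Lipschitz
in `f`.

Running the `Exp(1)` clocks at the intensity given by the fixed point produces the jump times. Their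
occupation probabilities solve the linear forward equation with this intensity, and so does the
fixed point; by uniqueness the two agree, which turns the ratio into `E[η_s | X_{s-}]`. In the
filtration enlarged by `F_∞` at time `0`, each jump is compensated by the hazard that its clock has
used up.
-/

/-! ### Arrival times of a clock with bounded rates -/

/-- A measurable rate function with values in `[lo, up]`, where `lo > 0`. -/
structure BoundedRate (lo up : ℝ) (c : ℝ → ℝ) : Prop where
  lo_pos : 0 < lo
  measurable : Measurable c
  lo_le : ∀ s, lo ≤ c s
  le_up : ∀ s, c s ≤ up

namespace BoundedRate

variable {lo up : ℝ} {c : ℝ → ℝ}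

lemma pos (h : BoundedRate lo up c) (s : ℝ) : 0 < c s := h.lo_pos.trans_le (h.lo_le s)

lemma up_pos (h : BoundedRate lo up c) : 0 < up := (h.pos 0).trans_le (h.le_up 0)

lemma integrableOn_Ioc (h : BoundedRate lo up c) (a b : ℝ) : IntegrableOn c (Ioc a b) := by
  refine Measure.integrableOn_of_bounded (M := up) (by simp) h.measurable.aestronglyMeasurable
    (ae_of_all _ fun s => ?_)
  rw [Real.norm_eq_abs, abs_of_pos (h.pos s)]
  exact h.le_up s

lemma setIntegral_le (h : BoundedRate lo up c) {a b : ℝ} (hab : a ≤ b) :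
    ∫ s in Ioc a b, c s ≤ up * (b - a) := by
  have := setIntegral_mono (μ := volume) (s := Ioc a b) (h.integrableOn_Ioc a b)
    (integrableOn_const (by simp)) (g := fun _ => up) h.le_up
  simpa [hab, mul_comm] using this

lemma le_setIntegral (h : BoundedRate lo up c) {a b : ℝ} (hab : a ≤ b) :
    lo * (b - a) ≤ ∫ s in Ioc a b, c s := by
  have := setIntegral_mono (μ := volume) (s := Ioc a b) (f := fun _ => lo)
    (integrableOn_const (by simp)) (h.integrableOn_Ioc a b) h.lo_le
  simpa [hab, mul_comm] using this

lemma le_setIntegral_add_div (h : BoundedRate lo up c) (a : ℝ) {e : ℝ} (he : 0 ≤ e) :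
    e ≤ ∫ s in Ioc a (a + e / lo), c s := by
  have := h.le_setIntegral (le_add_of_nonneg_right (a := a) (div_nonneg he h.lo_pos.le))
  rwa [add_sub_cancel_left, mul_div_cancel₀ e h.lo_pos.ne'] at this

lemma setIntegral_Ioc_add (h : BoundedRate lo up c) {a s t : ℝ} (has : a ≤ s) (hst : s ≤ t) :
    ∫ r in Ioc a t, c r = (∫ r in Ioc a s, c r) + ∫ r in Ioc s t, c r := by
  rw [← Ioc_union_Ioc_eq_Ioc has hst, setIntegral_union (Ioc_disjoint_Ioc_of_le le_rfl)
    measurableSet_Ioc (h.integrableOn_Ioc _ _) (h.integrableOn_Ioc _ _)]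

lemma setIntegral_nonneg (h : BoundedRate lo up c) (a t : ℝ) : 0 ≤ ∫ r in Ioc a t, c r :=
  integral_nonneg fun s => (h.pos s).le

lemma monotone_setIntegral (h : BoundedRate lo up c) (a : ℝ) :
    Monotone fun t => ∫ r in Ioc a t, c r := fun _ t hst =>
  setIntegral_mono_set (h.integrableOn_Ioc a t) (ae_of_all _ fun s => (h.pos s).le)
    (Ioc_subset_Ioc_right hst).eventuallyLE

lemma continuous_setIntegral (h : BoundedRate lo up c) (a : ℝ) :
    Continuous fun t => ∫ r in Ioc a t, c r := by
  have eq_interval : ∀ t, ∫ r in Ioc a t, c r = ∫ r in a..max a t, c r := fun t => by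
    rw [intervalIntegral.integral_of_le (le_max_left a t)]
    rcases le_total a t with h | h <;> simp [h]
  simp_rw [eq_interval]
  exact (intervalIntegral.continuous_primitive
    (fun a b => ⟨h.integrableOn_Ioc a b, h.integrableOn_Ioc b a⟩) a).comp (by fun_prop)

lemma csInf_le_iff_le_setIntegral (h : BoundedRate lo up c) {a e : ℝ} (he : 0 < e) (t : ℝ) :
    sInf {t | e ≤ ∫ s in Ioc a t, c s} ≤ t ↔ e ≤ ∫ s in Ioc a t, c s := by
  set A := {t | e ≤ ∫ s in Ioc a t, c s} with hA
  have hbdd : BddBelow A := by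
    refine ⟨a, fun t ht => ?_⟩
    by_contra! hlt
    rw [hA, mem_ofPred_eq, Ioc_eq_empty_of_le hlt.le, setIntegral_empty] at ht
    exact he.not_ge ht
  have hmem : sInf A ∈ A := (isClosed_le continuous_const (h.continuous_setIntegral a)).csInf_mem
    ⟨a + e / lo, h.le_setIntegral_add_div a he.le⟩ hbdd
  exact ⟨fun hle => hmem.trans (h.monotone_setIntegral a hle), fun hle => csInf_le hbdd hle⟩

end BoundedRate

/-- The successive arrival times of the clock which, after its `k`-th arrival, runs at rate `c k`
until the accumulated rate reaches the level `e k`. -/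
def arrivalTime (c : ℕ → ℝ → ℝ) (e : ℕ → ℝ) : ℕ → ℝ
  | 0 => 0
  | k + 1 => sInf {t | e k ≤ ∫ s in Ioc (arrivalTime c e k) t, c k s}

/-- The rate `c k` accumulated from the `k`-th arrival up to time `t`, as if no further arrival
occurred. -/
def cumHazard (c : ℕ → ℝ → ℝ) (e : ℕ → ℝ) (k : ℕ) (t : ℝ) : ℝ :=
  ∫ s in Ioc (arrivalTime c e k) t, c k s

section Arrival

variable {lo up : ℝ} {c : ℕ → ℝ → ℝ} {e : ℕ → ℝ}

@[simp] lemma arrivalTime_zero : arrivalTime c e 0 = 0 := rfl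

lemma cumHazard_of_le {k : ℕ} {t : ℝ} (h : t ≤ arrivalTime c e k) : cumHazard c e k t = 0 := by
  simp [cumHazard, Ioc_eq_empty_of_le h]

variable (hc : ∀ k, BoundedRate lo up (c k))
include hc

lemma cumHazard_nonneg (k : ℕ) (t : ℝ) : 0 ≤ cumHazard c e k t := (hc k).setIntegral_nonneg _ _

lemma cumHazard_le_mul_sub {k : ℕ} {t : ℝ} (h : arrivalTime c e k ≤ t) :
    cumHazard c e k t ≤ up * (t - arrivalTime c e k) := (hc k).setIntegral_le h

variable (he : ∀ k, 0 < e k)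
include he

lemma arrivalTime_succ_le_iff (k : ℕ) (t : ℝ) :
    arrivalTime c e (k + 1) ≤ t ↔ e k ≤ cumHazard c e k t :=
  (hc k).csInf_le_iff_le_setIntegral (he k) t

lemma arrivalTime_lt_succ (k : ℕ) : arrivalTime c e k < arrivalTime c e (k + 1) := by
  rw [← not_le, arrivalTime_succ_le_iff hc he, cumHazard_of_le le_rfl, not_le]
  exact he k

lemma strictMono_arrivalTime : StrictMono (arrivalTime c e) :=
  strictMono_nat_of_lt_succ (arrivalTime_lt_succ hc he)

lemma arrivalTime_nonneg (k : ℕ) : 0 ≤ arrivalTime c e k :=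
  (strictMono_arrivalTime hc he).monotone k.zero_le

lemma cumHazard_arrivalTime_succ (k : ℕ) : cumHazard c e k (arrivalTime c e (k + 1)) = e k := by
  apply le_antisymm _ ((arrivalTime_succ_le_iff hc he k _).1 le_rfl)
  have hcont : Continuous (cumHazard c e k) := (hc k).continuous_setIntegral _
  refine le_of_tendsto
    (hcont.continuousAt.mono_left (nhdsWithin_le_nhds (s := Iio (arrivalTime c e (k + 1))))) ?_
  filter_upwards [self_mem_nhdsWithin] with t ht
  exact (not_le.1 ((arrivalTime_succ_le_iff hc he k t).not.1 (not_le.2 ht))).le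

lemma arrivalTime_succ_lt_iff (k : ℕ) (t : ℝ) :
    arrivalTime c e (k + 1) < t ↔ e k < cumHazard c e k t := by
  constructor
  · intro h
    have hadd : cumHazard c e k t = e k + ∫ r in Ioc (arrivalTime c e (k + 1)) t, c k r := by
      rw [← cumHazard_arrivalTime_succ hc he k]
      exact (hc k).setIntegral_Ioc_add (arrivalTime_lt_succ hc he k).le h.le
    have := (hc k).le_setIntegral h.le
    have := mul_pos (hc k).lo_pos (sub_pos.2 h)
    linarith
  · intro h
    refine lt_of_le_of_ne ((arrivalTime_succ_le_iff hc he k t).2 h.le) ?_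
    rintro rfl
    exact h.ne' (cumHazard_arrivalTime_succ hc he k)

lemma cumHazard_le_mul {k : ℕ} {t : ℝ} (ht : 0 ≤ t) : cumHazard c e k t ≤ up * t := by
  rcases le_total (arrivalTime c e k) t with h | h
  · refine (cumHazard_le_mul_sub hc h).trans ?_
    have := arrivalTime_nonneg hc he k
    exact mul_le_mul_of_nonneg_left (by linarith) (hc k).up_pos.le
  · rw [cumHazard_of_le h]
    exact mul_nonneg (hc k).up_pos.le ht

lemma arrivalTime_succ_le_add_div (k : ℕ) :
    arrivalTime c e (k + 1) ≤ arrivalTime c e k + e k / lo :=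
  (arrivalTime_succ_le_iff hc he k _).2 ((hc k).le_setIntegral_add_div _ (he k).le)

lemma min_cumHazard_eq (k : ℕ) (t : ℝ) :
    min (cumHazard c e k t) (e k) = cumHazard c e k (min t (arrivalTime c e (k + 1))) := by
  have hm : Monotone (cumHazard c e k) := (hc k).monotone_setIntegral _
  rw [hm.map_min, cumHazard_arrivalTime_succ hc he]

lemma min_cumHazard_eq_setIntegral (k : ℕ) (t : ℝ) :
    min (cumHazard c e k t) (e k) = ∫ s in Ioc 0 t,
      indicator (Ioc (arrivalTime c e k) (arrivalTime c e (k + 1))) (c k) s := by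
  rw [min_cumHazard_eq hc he, setIntegral_indicator measurableSet_Ioc, Ioc_inter_Ioc, cumHazard,
    sup_eq_right.2 (arrivalTime_nonneg hc he k)]

lemma sum_min_cumHazard_le (n : ℕ) {t : ℝ} (ht : 0 ≤ t) :
    ∑ k ∈ Finset.range n, min (cumHazard c e k t) (e k) ≤ up * t := by
  have increment_le : ∀ k, min (cumHazard c e k t) (e k) ≤
      up * min t (arrivalTime c e (k + 1)) - up * min t (arrivalTime c e k) := by
    intro k
    rw [min_cumHazard_eq hc he, ← mul_sub]
    have hlt := (arrivalTime_lt_succ hc he k).le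
    rcases le_total t (arrivalTime c e k) with h | h
    · rw [min_eq_left (h.trans hlt), min_eq_left h, cumHazard_of_le h, sub_self, mul_zero]
    · rw [min_eq_right h]
      exact cumHazard_le_mul_sub hc (le_min h hlt)
  calc ∑ k ∈ Finset.range n, min (cumHazard c e k t) (e k)
      ≤ ∑ k ∈ Finset.range n,
          (up * min t (arrivalTime c e (k + 1)) - up * min t (arrivalTime c e k)) :=
        Finset.sum_le_sum fun k _ => increment_le k
    _ = up * min t (arrivalTime c e n) := by
        rw [Finset.sum_range_sub fun k => up * min t (arrivalTime c e k), arrivalTime_zero,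
          min_eq_right ht, mul_zero, sub_zero]
    _ ≤ up * t := mul_le_mul_of_nonneg_left (min_le_left _ _) (hc 0).up_pos.le

end Arrival

section Measurability

variable [MeasurableSpace Ω]

lemma measurable_setIntegral_Ioc {c : Ω → ℝ → ℝ} {τ : Ω → ℝ}
    (hc : Measurable fun p : Ω × ℝ => c p.1 p.2) (hτ : Measurable τ) (t : ℝ) :
    Measurable fun ω => ∫ s in Ioc (τ ω) t, c ω s := by
  simp_rw [← integral_indicator measurableSet_Ioc]
  have hs : MeasurableSet {p : Ω × ℝ | p.2 ∈ Ioc (τ p.1) t} :=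
    (measurableSet_lt (hτ.comp measurable_fst) measurable_snd).inter
      (measurableSet_le measurable_snd measurable_const)
  have hind : Measurable fun p : Ω × ℝ => indicator (Ioc (τ p.1) t) (c p.1) p.2 := hc.indicator hs
  exact (hind.stronglyMeasurable.integral_prod_right (ν := volume)).measurable

lemma measurable_arrivalTime_succ {lo up : ℝ} {c : ℕ → Ω → ℝ → ℝ} {e : ℕ → Ω → ℝ}
    (hc : ∀ k ω, BoundedRate lo up (c k ω)) (he : ∀ k ω, 0 < e k ω) {k : ℕ}
    (hm : ∀ t, Measurable fun ω => cumHazard (c · ω) (e · ω) k t) (hek : Measurable (e k)) :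
    Measurable fun ω => arrivalTime (c · ω) (e · ω) (k + 1) := by
  refine measurable_of_Iic fun t => ?_
  have hset : (fun ω => arrivalTime (c · ω) (e · ω) (k + 1)) ⁻¹' Iic t =
      {ω | e k ω ≤ cumHazard (c · ω) (e · ω) k t} := by
    ext ω
    exact arrivalTime_succ_le_iff (fun k => hc k ω) (fun k => he k ω) k t
  rw [hset]
  exact measurableSet_le hek (hm t)

lemma measurable_arrivalTime {lo up : ℝ} {c : ℕ → Ω → ℝ → ℝ} {e : ℕ → Ω → ℝ}
    (hc : ∀ k ω, BoundedRate lo up (c k ω)) (he : ∀ k ω, 0 < e k ω)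
    (hcm : ∀ k, Measurable fun p : Ω × ℝ => c k p.1 p.2) (hem : ∀ k, Measurable (e k)) (k : ℕ) :
    Measurable fun ω => arrivalTime (c · ω) (e · ω) k := by
  induction k with
  | zero => exact measurable_const
  | succ k ih =>
    exact measurable_arrivalTime_succ hc he (measurable_setIntegral_Ioc (hcm k) ih) (hem k)

end Measurability

/-! ### Exponential clocks -/

section Independence

variable {β : Type*} {m m0 : MeasurableSpace Ω} {mβ : MeasurableSpace β} {μ : Measure Ω}
  [IsProbabilityMeasure μ]

lemma lintegral_comp_of_indepFun {α : Type*} [MeasurableSpace α] {X : Ω → α} {Y : Ω → β}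
    (hX : Measurable X) (hY : Measurable Y) (h : IndepFun X Y μ) {f : α × β → ℝ≥0∞}
    (hf : Measurable f) :
    ∫⁻ ω, f (X ω, Y ω) ∂μ = ∫⁻ ω, ∫⁻ ω', f (X ω, Y ω') ∂μ ∂μ := by
  have hmap := (indepFun_iff_map_prod_eq_prod_map_map hX.aemeasurable hY.aemeasurable).1 h
  have := Measure.isProbabilityMeasure_map (μ := μ) hY.aemeasurable
  rw [← lintegral_map hf (hX.prodMk hY), hmap, lintegral_prod _ hf.aemeasurable,
    lintegral_map hf.lintegral_prod_right' hX]
  exact lintegral_congr fun ω => lintegral_map (hf.comp measurable_prodMk_left) hY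

lemma lintegral_comp_of_indep (hm : m ≤ m0) {Y : Ω → β} (hY : Measurable Y)
    (h : Indep m (MeasurableSpace.comap Y mβ) μ) {f : Ω × β → ℝ≥0∞}
    (hf : Measurable[m.prod mβ] f) :
    ∫⁻ ω, f (ω, Y ω) ∂μ = ∫⁻ ω, ∫⁻ ω', f (ω, Y ω') ∂μ ∂μ := by
  refine @lintegral_comp_of_indepFun Ω β m0 mβ μ _ Ω m id Y (measurable_id'' hm) hY ?_ f hf
  rwa [@IndepFun_iff_Indep Ω Ω β m0 m mβ id Y μ, MeasurableSpace.comap_id]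

lemma setLIntegral_comp_of_indep (hm : m ≤ m0) {Y : Ω → β} (hY : Measurable Y)
    (h : Indep m (MeasurableSpace.comap Y mβ) μ) {B : Set Ω} (hB : MeasurableSet[m] B)
    {f : Ω × β → ℝ≥0∞} (hf : Measurable[m.prod mβ] f) :
    ∫⁻ ω in B, f (ω, Y ω) ∂μ = ∫⁻ ω in B, ∫⁻ ω', f (ω, Y ω') ∂μ ∂μ := by
  have hind : Measurable[m.prod mβ] (indicator (Prod.fst ⁻¹' B) f) :=
    hf.indicator (@measurable_fst Ω β m mβ B hB)
  have := lintegral_comp_of_indep hm hY h hind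
  rw [← lintegral_indicator (hm _ hB), ← lintegral_indicator (hm _ hB)]
  convert this using 2
  · ext ω
    by_cases hω : ω ∈ B <;> simp [indicator, hω]
  · ext ω
    by_cases hω : ω ∈ B <;> simp [indicator, hω]

end Independence

section ExpOne

variable {m0 : MeasurableSpace Ω} {μ : Measure Ω} [IsProbabilityMeasure μ] {e : Ω → ℝ}

lemma IsExpOne.measure_le (h : IsExpOne μ e) {a : ℝ} (ha : 0 ≤ a) :
    μ {ω | e ω ≤ a} = ENNReal.ofReal (1 - Real.exp (-a)) := by
  have hcompl : {ω | e ω ≤ a} = {ω | a < e ω}ᶜ := by ext; simp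
  rw [hcompl, prob_compl_eq_one_sub (measurableSet_lt measurable_const h.1), h.2 a ha,
    ENNReal.ofReal_sub _ (Real.exp_pos _).le, ENNReal.ofReal_one]

lemma IsExpOne.ae_pos (h : IsExpOne μ e) : ∀ᵐ ω ∂μ, 0 < e ω := by
  rw [ae_iff]
  simpa using h.measure_le le_rfl

lemma IsExpOne.measure_lt (h : IsExpOne μ e) {a : ℝ} (ha : 0 ≤ a) :
    μ {ω | e ω < a} = ENNReal.ofReal (1 - Real.exp (-a)) := by
  refine le_antisymm ((measure_mono fun ω (hω : e ω < a) => hω.le).trans (h.measure_le ha).le) ?_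
  rcases ha.eq_or_lt with rfl | ha
  · simp
  have hcont : Continuous fun b : ℝ => ENNReal.ofReal (1 - Real.exp (-b)) :=
    ENNReal.continuous_ofReal.comp (by fun_prop)
  refine le_of_tendsto ((hcont.tendsto a).mono_left (nhdsWithin_le_nhds (s := Iio a))) ?_
  filter_upwards [Ioo_mem_nhdsLT ha] with b hb
  rw [← h.measure_le hb.1.le]
  exact measure_mono fun ω hω => lt_of_le_of_lt hω hb.2

lemma IsExpOne.lintegral_min (h : IsExpOne μ e) {a : ℝ} (ha : 0 ≤ a) :
    ∫⁻ ω, ENNReal.ofReal (min a (e ω)) ∂μ = ENNReal.ofReal (1 - Real.exp (-a)) := by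
  have hnonneg : 0 ≤ᵐ[μ] fun ω => min a (e ω) := by
    filter_upwards [h.ae_pos] with ω hω using le_min ha hω.le
  have tail : ∀ t ∈ Ioi (0 : ℝ), μ {ω | t < min a (e ω)} =
      indicator (Iio a) (fun t => ENNReal.ofReal (Real.exp (-t))) t := by
    intro t ht
    by_cases hta : t < a
    · rw [indicator_of_mem (mem_Iio.2 hta), ← h.2 t (le_of_lt ht)]
      simp [hta]
    · rw [indicator_of_notMem (notMem_Iio.2 (not_lt.1 hta))]
      simp [hta]
  have integral_exp : ∫ t in Ioo 0 a, Real.exp (-t) = 1 - Real.exp (-a) := by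
    rw [← integral_Ioc_eq_integral_Ioo, ← intervalIntegral.integral_of_le ha,
      intervalIntegral.integral_comp_neg Real.exp]
    simp
  rw [lintegral_eq_lintegral_meas_lt μ hnonneg (measurable_const.min h.1).aemeasurable,
    setLIntegral_congr_fun measurableSet_Ioi tail, setLIntegral_indicator measurableSet_Iio,
    inter_comm, Ioi_inter_Iio, ← integral_exp, ofReal_integral_eq_lintegral_ofReal
      ((Continuous.integrableOn_Icc (by fun_prop)).mono_set Ioo_subset_Icc_self)
      (ae_of_all _ fun t => (Real.exp_pos _).le)]

variable {m : MeasurableSpace Ω} {A : Ω → ℝ} {B : Set Ω}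

lemma IsExpOne.setLIntegral_min_of_indep (h : IsExpOne μ e) (hm : m ≤ m0)
    (hi : Indep m (MeasurableSpace.comap e inferInstance) μ) (hA : Measurable[m] A)
    (hA0 : ∀ ω, 0 ≤ A ω) (hB : MeasurableSet[m] B) :
    ∫⁻ ω in B, ENNReal.ofReal (min (A ω) (e ω)) ∂μ =
      ∫⁻ ω in B, ENNReal.ofReal (1 - Real.exp (-A ω)) ∂μ := by
  have hmin : Measurable[m.prod inferInstance]
      fun p : Ω × ℝ => ENNReal.ofReal (min (A p.1) p.2) := by
    let _ := m
    exact ((hA.comp measurable_fst).min measurable_snd).ennreal_ofReal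
  rw [setLIntegral_comp_of_indep hm h.1 hi hB hmin]
  exact lintegral_congr fun ω => h.lintegral_min (hA0 ω)

/- The right-hand side is not simplified to `E[1_B (1 - exp (-A))]`: `min A e` is the compensator of
the jump at level `e`, and it is additive over the intervals on which `A` accumulates. -/
lemma IsExpOne.measure_inter_le_of_indep (h : IsExpOne μ e) (hm : m ≤ m0)
    (hi : Indep m (MeasurableSpace.comap e inferInstance) μ) (hA : Measurable[m] A)
    (hA0 : ∀ ω, 0 ≤ A ω) (hB : MeasurableSet[m] B) :
    μ (B ∩ {ω | e ω ≤ A ω}) = ∫⁻ ω in B, ENNReal.ofReal (min (A ω) (e ω)) ∂μ := by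
  have hset : MeasurableSet[m.prod inferInstance] {p : Ω × ℝ | p.2 ≤ A p.1} := by
    let _ := m
    exact measurableSet_le measurable_snd (hA.comp measurable_fst)
  rw [h.setLIntegral_min_of_indep hm hi hA hA0 hB, inter_comm,
    ← Measure.restrict_apply (measurableSet_le h.1 (hA.mono hm le_rfl)),
    ← lintegral_indicator_one (measurableSet_le h.1 (hA.mono hm le_rfl))]
  refine (setLIntegral_comp_of_indep hm h.1 hi hB (measurable_one.indicator hset)).trans
    (lintegral_congr fun ω => ?_)
  rw [← h.measure_le (hA0 ω), ← lintegral_indicator_one (measurableSet_le h.1 measurable_const)]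
  rfl

lemma IsExpOne.measure_inter_lt_of_indep (h : IsExpOne μ e) (hm : m ≤ m0)
    (hi : Indep m (MeasurableSpace.comap e inferInstance) μ) (hA : Measurable[m] A)
    (hA0 : ∀ ω, 0 ≤ A ω) (hB : MeasurableSet[m] B) :
    μ (B ∩ {ω | e ω < A ω}) = ∫⁻ ω in B, ENNReal.ofReal (min (A ω) (e ω)) ∂μ := by
  have hset : MeasurableSet[m.prod inferInstance] {p : Ω × ℝ | p.2 < A p.1} := by
    let _ := m
    exact measurableSet_lt measurable_snd (hA.comp measurable_fst)
  rw [h.setLIntegral_min_of_indep hm hi hA hA0 hB, inter_comm,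
    ← Measure.restrict_apply (measurableSet_lt h.1 (hA.mono hm le_rfl)),
    ← lintegral_indicator_one (measurableSet_lt h.1 (hA.mono hm le_rfl))]
  refine (setLIntegral_comp_of_indep hm h.1 hi hB (measurable_one.indicator hset)).trans
    (lintegral_congr fun ω => ?_)
  rw [← h.measure_lt (hA0 ω), ← lintegral_indicator_one (measurableSet_lt h.1 measurable_const)]
  rfl

end ExpOne

/-- The jump times of a counting process whose `k`-th inter-jump intensity is the random rate
`c k ω`, driven by the clocks `e k`. -/
def jumpTime (c : ℕ → Ω → ℝ → ℝ) (e : ℕ → Ω → ℝ) (k : ℕ) (ω : Ω) : ℝ :=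
  arrivalTime (c · ω) (e · ω) k

/-- The intensity `c k ω` accumulated since the `k`-th jump. -/
def jumpHazard (c : ℕ → Ω → ℝ → ℝ) (e : ℕ → Ω → ℝ) (k : ℕ) (t : ℝ) (ω : Ω) : ℝ :=
  cumHazard (c · ω) (e · ω) k t

/-- Bounded random rates `c` driven by positive `Exp(1)` clocks `e`: here `H k` is the information
available up to (and including) the `k`-th jump, plus everything that is not a clock; it determines
the rate `c k` and is independent of the next clock `e k`. -/
structure IsClockModel {m0 : MeasurableSpace Ω} (μ : Measure Ω) (lo up : ℝ)
    (H : ℕ → MeasurableSpace Ω) (c : ℕ → Ω → ℝ → ℝ) (e : ℕ → Ω → ℝ) : Prop where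
  le : ∀ k, H k ≤ m0
  mono : Monotone H
  rate : ∀ k ω, BoundedRate lo up (c k ω)
  clock_pos : ∀ k ω, 0 < e k ω
  measurable_rate : ∀ k, Measurable[(H k).prod inferInstance] (fun p : Ω × ℝ => c k p.1 p.2)
  measurable_clock : ∀ k, Measurable[H (k + 1)] (e k)
  indep : ∀ k, Indep (H k) (MeasurableSpace.comap (e k) inferInstance) μ
  isExpOne : ∀ k, IsExpOne μ (e k)

namespace IsClockModel

variable {m0 : MeasurableSpace Ω} {μ : Measure Ω} {lo up : ℝ} {H : ℕ → MeasurableSpace Ω}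
  {c : ℕ → Ω → ℝ → ℝ} {e : ℕ → Ω → ℝ} (S : IsClockModel μ lo up H c e)
include S

lemma measurable_jumpTime (k : ℕ) : Measurable[H k] (jumpTime c e k) := by
  induction k with
  | zero => exact @measurable_const _ _ _ (H 0) 0
  | succ k ih =>
    exact @measurable_arrivalTime_succ Ω (H (k + 1)) lo up c e S.rate S.clock_pos k
      (fun t => (@measurable_setIntegral_Ioc Ω (H k) (c k) _ (S.measurable_rate k) ih t).mono
        (S.mono k.le_succ) le_rfl) (S.measurable_clock k)

lemma measurable_jumpTime' (k : ℕ) : Measurable (jumpTime c e k) :=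
  (S.measurable_jumpTime k).mono (S.le _) le_rfl

lemma measurable_jumpHazard (k : ℕ) (t : ℝ) : Measurable[H k] (jumpHazard c e k t) :=
  @measurable_setIntegral_Ioc Ω (H k) (c k) _ (S.measurable_rate k) (S.measurable_jumpTime k) t

lemma jumpHazard_nonneg (k : ℕ) (t : ℝ) (ω : Ω) : 0 ≤ jumpHazard c e k t ω :=
  cumHazard_nonneg (fun k => S.rate k ω) k t

lemma min_jumpHazard_nonneg (k : ℕ) (t : ℝ) (ω : Ω) : 0 ≤ min (jumpHazard c e k t ω) (e k ω) :=
  le_min (S.jumpHazard_nonneg k t ω) (S.clock_pos k ω).le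

lemma jumpTime_succ_le_iff (k : ℕ) (t : ℝ) (ω : Ω) :
    jumpTime c e (k + 1) ω ≤ t ↔ e k ω ≤ jumpHazard c e k t ω :=
  arrivalTime_succ_le_iff (fun k => S.rate k ω) (fun k => S.clock_pos k ω) k t

lemma strictMono_jumpTime (ω : Ω) : StrictMono fun k => jumpTime c e k ω :=
  strictMono_arrivalTime (fun k => S.rate k ω) (fun k => S.clock_pos k ω)

variable [IsProbabilityMeasure μ]

lemma measure_inter_jumpTime_succ_le (k : ℕ) (t : ℝ) {B : Set Ω} (hB : MeasurableSet[H k] B) :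
    μ (B ∩ {ω | jumpTime c e (k + 1) ω ≤ t}) =
      ∫⁻ ω in B, ENNReal.ofReal (min (jumpHazard c e k t ω) (e k ω)) ∂μ := by
  simp_rw [S.jumpTime_succ_le_iff]
  exact (S.isExpOne k).measure_inter_le_of_indep (S.le k) (S.indep k)
    (S.measurable_jumpHazard k t) (S.jumpHazard_nonneg k t) hB

lemma measure_inter_jumpTime_succ_lt (k : ℕ) (t : ℝ) {B : Set Ω} (hB : MeasurableSet[H k] B) :
    μ (B ∩ {ω | jumpTime c e (k + 1) ω < t}) =
      ∫⁻ ω in B, ENNReal.ofReal (min (jumpHazard c e k t ω) (e k ω)) ∂μ := by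
  have hlt : ∀ ω, jumpTime c e (k + 1) ω < t ↔ e k ω < jumpHazard c e k t ω := fun ω =>
    arrivalTime_succ_lt_iff (fun k => S.rate k ω) (fun k => S.clock_pos k ω) k t
  simp_rw [hlt]
  exact (S.isExpOne k).measure_inter_lt_of_indep (S.le k) (S.indep k)
    (S.measurable_jumpHazard k t) (S.jumpHazard_nonneg k t) hB

lemma tsum_measure_jumpTime_succ_le {t : ℝ} (ht : 0 ≤ t) :
    ∑' k, μ {ω | jumpTime c e (k + 1) ω ≤ t} ≤ ENNReal.ofReal (up * t) := by
  have hk : ∀ k, μ {ω | jumpTime c e (k + 1) ω ≤ t} =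
      ∫⁻ ω, ENNReal.ofReal (min (jumpHazard c e k t ω) (e k ω)) ∂μ := fun k => by
    simpa using S.measure_inter_jumpTime_succ_le k t (B := univ) MeasurableSet.univ
  have hmeas : ∀ k, Measurable fun ω => ENNReal.ofReal (min (jumpHazard c e k t ω) (e k ω)) :=
    fun k => (((S.measurable_jumpHazard k t).mono (S.le k) le_rfl).min
      (S.isExpOne k).1).ennreal_ofReal
  calc ∑' k, μ {ω | jumpTime c e (k + 1) ω ≤ t}
      = ∫⁻ ω, ∑' k, ENNReal.ofReal (min (jumpHazard c e k t ω) (e k ω)) ∂μ := by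
        simp_rw [hk]
        exact (lintegral_tsum fun k => (hmeas k).aemeasurable).symm
    _ ≤ ∫⁻ _, ENNReal.ofReal (up * t) ∂μ := by
        refine lintegral_mono fun ω => ENNReal.tsum_le_of_sum_range_le fun n => ?_
        rw [← ENNReal.ofReal_sum_of_nonneg fun k _ => S.min_jumpHazard_nonneg k t ω]
        exact ENNReal.ofReal_le_ofReal
          (sum_min_cumHazard_le (fun k => S.rate k ω) (fun k => S.clock_pos k ω) n ht)
    _ = ENNReal.ofReal (up * t) := by simp

lemma ae_tendsto_jumpTime : ∀ᵐ ω ∂μ, Tendsto (fun k => jumpTime c e k ω) atTop atTop := by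
  have borel_cantelli : ∀ n : ℕ, ∀ᵐ ω ∂μ, ∀ᶠ k in atTop, ω ∉ {ω | jumpTime c e (k + 1) ω ≤ n} :=
    fun n => ae_eventually_notMem
      (ne_top_of_le_ne_top ENNReal.ofReal_ne_top (S.tsum_measure_jumpTime_succ_le n.cast_nonneg))
  filter_upwards [ae_all_iff.2 borel_cantelli] with ω hω
  refine tendsto_atTop_atTop_of_monotone (S.strictMono_jumpTime ω).monotone fun b => ?_
  obtain ⟨n, hn⟩ := exists_nat_ge b
  obtain ⟨k, hk⟩ := (hω n).exists
  exact ⟨k + 1, hn.trans (not_le.1 hk).le⟩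

end IsClockModel

/-! ### Martingales in the enlarged filtration -/

section JumpFiltration

variable {m0 : MeasurableSpace Ω} {μ : Measure Ω} {H : ℕ → MeasurableSpace Ω} {τ : ℕ → Ω → ℝ}

/-- The information available at time `t` when `H k` is the information carried by the first `k`
jumps: the events which, before the `(k + 1)`-th jump, agree with an event of `H k`. -/
@[reducible] def jumpPast (m0 : MeasurableSpace Ω) (H : ℕ → MeasurableSpace Ω) (τ : ℕ → Ω → ℝ)
    (t : ℝ) : MeasurableSpace Ω where
  MeasurableSet' A := MeasurableSet[m0] A ∧
    ∀ k, ∃ B, MeasurableSet[H k] B ∧ ∀ ω, t < τ (k + 1) ω → (ω ∈ A ↔ ω ∈ B)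
  measurableSet_empty :=
    ⟨@MeasurableSet.empty _ m0, fun k => ⟨∅, @MeasurableSet.empty _ (H k), by simp⟩⟩
  measurableSet_compl := by
    rintro A ⟨hA, h⟩
    refine ⟨hA.compl, fun k => ?_⟩
    obtain ⟨B, hB, hAB⟩ := h k
    exact ⟨Bᶜ, hB.compl, fun ω hω => not_congr (hAB ω hω)⟩
  measurableSet_iUnion := by
    intro f hf
    refine ⟨MeasurableSet.iUnion fun n => (hf n).1, fun k => ?_⟩
    choose B hB hAB using fun n => (hf n).2 k
    refine ⟨⋃ n, B n, MeasurableSet.iUnion hB, fun ω hω => ?_⟩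
    simp only [mem_iUnion]
    exact exists_congr fun n => hAB n ω hω

/-- The filtration `jumpPast`, extended by the whole σ-algebra at negative times: a filtration in
the sense of `IsFiltration` is unconstrained there, and is to be contained in this one. -/
@[reducible] def jumpFiltration (m0 : MeasurableSpace Ω) (H : ℕ → MeasurableSpace Ω)
    (τ : ℕ → Ω → ℝ) (t : ℝ) : MeasurableSpace Ω :=
  if t < 0 then m0 else jumpPast m0 H τ t

lemma jumpFiltration_of_neg {t : ℝ} (ht : t < 0) : jumpFiltration m0 H τ t = m0 := if_pos ht

lemma jumpFiltration_of_nonneg {t : ℝ} (ht : 0 ≤ t) :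
    jumpFiltration m0 H τ t = jumpPast m0 H τ t := if_neg ht.not_gt

lemma jumpFiltration_le (t : ℝ) : jumpFiltration m0 H τ t ≤ m0 := by
  rcases lt_or_ge t 0 with ht | ht
  · rw [jumpFiltration_of_neg ht]
  · rw [jumpFiltration_of_nonneg ht]
    exact fun A hA => hA.1

lemma jumpPast_mono {s t : ℝ} (hst : s ≤ t) : jumpPast m0 H τ s ≤ jumpPast m0 H τ t := by
  rintro A ⟨hA, h⟩
  refine ⟨hA, fun k => ?_⟩
  obtain ⟨B, hB, hAB⟩ := h k
  exact ⟨B, hB, fun ω hω => hAB ω (hst.trans_lt hω)⟩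

lemma measurableSet_jumpPast_of_forall_gt {t : ℝ} {A : Set Ω}
    (hA : ∀ s, t < s → MeasurableSet[jumpPast m0 H τ s] A) :
    MeasurableSet[jumpPast m0 H τ t] A := by
  refine ⟨(hA (t + 1) (by linarith)).1, fun k => ?_⟩
  have hpos : ∀ n : ℕ, t < t + 1 / ((n : ℝ) + 1) := fun n => by
    have : 0 < 1 / ((n : ℝ) + 1) := by positivity
    linarith
  choose B hB hAB using fun n : ℕ => (hA _ (hpos n)).2 k
  refine ⟨⋃ n, ⋂ m, B (n + m),
    MeasurableSet.iUnion fun n => MeasurableSet.iInter fun m => hB _, fun ω hω => ?_⟩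
  have hlim : Tendsto (fun n : ℕ => t + 1 / ((n : ℝ) + 1)) atTop (𝓝 t) := by
    simpa using tendsto_const_nhds.add (tendsto_one_div_add_atTop_nhds_zero_nat (𝕜 := ℝ))
  obtain ⟨N, hN⟩ := eventually_atTop.1 (hlim.eventually_lt_const hω)
  simp only [mem_iUnion, mem_iInter]
  constructor
  · exact fun h => ⟨N, fun m => (hAB _ ω (hN _ (by lia))).1 h⟩
  · rintro ⟨n, hn⟩
    exact (hAB _ ω (hN _ (by lia))).2 (hn N)

lemma usualConditions_jumpFiltration (hH : ∀ k, H k ≤ m0)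
    (hnull : ∀ k, ∀ s : Set Ω, μ s = 0 → MeasurableSet[H k] s) :
    UsualConditions μ (jumpFiltration m0 H τ) := by
  have mono : ∀ s t, 0 ≤ s → s ≤ t → jumpFiltration m0 H τ s ≤ jumpFiltration m0 H τ t := by
    intro s t hs hst
    rw [jumpFiltration_of_nonneg hs, jumpFiltration_of_nonneg (hs.trans hst)]
    exact jumpPast_mono hst
  refine ⟨⟨mono, jumpFiltration_le⟩, fun t ht => le_antisymm
    (le_iInf₂ fun s (hs : t < s) => mono t s ht hs.le) fun A hA => ?_, fun s hs => ?_⟩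
  · rw [jumpFiltration_of_nonneg ht]
    refine measurableSet_jumpPast_of_forall_gt fun s hs => ?_
    rw [← jumpFiltration_of_nonneg (ht.trans hs.le)]
    exact iInf₂_le (f := fun s (_ : s ∈ Ioi t) => jumpFiltration m0 H τ s) s hs A hA
  · rw [jumpFiltration_of_nonneg le_rfl]
    exact ⟨hH 0 _ (hnull 0 s hs), fun k => ⟨s, hnull k s hs, fun _ _ => Iff.rfl⟩⟩

lemma measurable_jumpFiltration (hH : ∀ k, H k ≤ m0) (hτ : ∀ k, Measurable (τ k))
    (hnull : ∀ s : Set Ω, μ s = 0 → MeasurableSet s) {t : ℝ} (ht : 0 ≤ t)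
    (hex : ∀ᵐ ω ∂μ, ∃ k, t < τ (k + 1) ω) {Y : Ω → ℝ} {Z : ℕ → Ω → ℝ}
    (hZ : ∀ k, Measurable[H k] (Z k)) (hYZ : ∀ k ω, t < τ (k + 1) ω → Y ω = Z k ω) :
    Measurable[jumpFiltration m0 H τ t] Y := by
  rw [jumpFiltration_of_nonneg ht]
  intro A hA
  refine ⟨?_, fun k => ⟨Z k ⁻¹' A, hZ k hA, fun ω hω => by simp [hYZ k ω hω]⟩⟩
  have hdecomp : Y ⁻¹' A = (⋃ k, (Z k ⁻¹' A) ∩ {ω | t < τ (k + 1) ω}) ∪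
      ((Y ⁻¹' A) ∩ {ω | ¬ ∃ k, t < τ (k + 1) ω}) := by
    ext ω
    simp only [mem_preimage, mem_union, mem_iUnion, mem_inter_iff, mem_ofPred_eq]
    constructor
    · intro h
      by_cases hk : ∃ k, t < τ (k + 1) ω
      · obtain ⟨k, hk⟩ := hk
        exact Or.inl ⟨k, by rwa [← hYZ k ω hk], hk⟩
      · exact Or.inr ⟨h, hk⟩
    · rintro (⟨k, h, hk⟩ | h)
      · rwa [hYZ k ω hk]
      · exact h.1
  rw [hdecomp]
  refine MeasurableSet.union (MeasurableSet.iUnion fun k => ?_)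
    (hnull _ (measure_mono_null inter_subset_right (ae_iff.1 hex)))
  exact (hH k _ (hZ k hA)).inter (measurableSet_lt measurable_const (hτ _))

lemma IsMartingale.congr {G : ℝ → MeasurableSpace Ω} (hG : UsualConditions μ G)
    {M M' : ℝ → Ω → ℝ} (hM : IsMartingale μ G M) (h : ∀ t, 0 ≤ t → M' t =ᵐ[μ] M t) :
    IsMartingale μ G M' := by
  refine ⟨fun t ht => (hM.1 t ht).congr (h t ht).symm, fun t ht A hA => ?_, fun s t hs hst =>
    (condExp_congr_ae (h t (hs.trans hst))).trans ((hM.2.2 s t hs hst).trans (h s hs).symm)⟩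
  have hnull : ∀ s : Set Ω, μ s = 0 → MeasurableSet[G t] s := fun s hs =>
    hG.1.1 0 t le_rfl ht _ (hG.2.2 s hs)
  have hne : μ {ω | M' t ω ≠ M t ω} = 0 := ae_iff.1 (h t ht)
  have hdecomp : M' t ⁻¹' A = ((M t ⁻¹' A) \ {ω | M' t ω ≠ M t ω}) ∪
      ((M' t ⁻¹' A) ∩ {ω | M' t ω ≠ M t ω}) := by
    ext ω
    by_cases hω : M' t ω = M t ω <;> simp [hω]
  rw [hdecomp]
  exact ((hM.2.1 t ht hA).diff (hnull _ hne)).union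
    (hnull _ (measure_mono_null inter_subset_right hne))

end JumpFiltration

/-- The `k`-th summand of the compensated process `∑ₖ h (J k) 1_{τₖ₊₁ ≤ t}`, where `m` stands for
the mean of `h (J k)`. -/
def compensatedJump (c : ℕ → Ω → ℝ → ℝ) (e J : ℕ → Ω → ℝ) (h : ℝ → ℝ) (m : ℝ) (k : ℕ) (t : ℝ)
    (ω : Ω) : ℝ :=
  (if jumpTime c e (k + 1) ω ≤ t then h (J k ω) else 0) - m * min (jumpHazard c e k t ω) (e k ω)

/-- A clock model whose `k`-th jump carries a mark `J k` of law `ν` that is independent of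
everything known just before this jump. -/
structure IsMarkedClockModel {m0 : MeasurableSpace Ω} (μ : Measure Ω) (lo up : ℝ) (ν : Measure ℝ)
    (H : ℕ → MeasurableSpace Ω) (c : ℕ → Ω → ℝ → ℝ) (e J : ℕ → Ω → ℝ) : Prop
    extends IsClockModel μ lo up H c e where
  measurable_mark : ∀ k, Measurable[H (k + 1)] (J k)
  map_mark : ∀ k, μ.map (J k) = ν
  indep_mark : ∀ k, Indep (MeasurableSpace.comap (J k) inferInstance)
    (H k ⊔ MeasurableSpace.comap (e k) inferInstance) μ
  measurableSet_of_null : ∀ s : Set Ω, μ s = 0 → MeasurableSet[H 0] s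

namespace IsMarkedClockModel

variable {m0 : MeasurableSpace Ω} {μ : Measure Ω} {lo up : ℝ} {ν : Measure ℝ}
  {H : ℕ → MeasurableSpace Ω} {c : ℕ → Ω → ℝ → ℝ} {e J : ℕ → Ω → ℝ}
  (S : IsMarkedClockModel μ lo up ν H c e J)
include S

lemma measurable_mark' (k : ℕ) : Measurable (J k) := (S.measurable_mark k).mono (S.le _) le_rfl

lemma measurable_min_jumpHazard (k : ℕ) (t : ℝ) :
    Measurable fun ω => min (jumpHazard c e k t ω) (e k ω) :=
  ((S.measurable_jumpHazard k t).mono (S.le k) le_rfl).min (S.isExpOne k).1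

lemma sup_comap_clock_le (k : ℕ) : H k ⊔ MeasurableSpace.comap (e k) inferInstance ≤ m0 :=
  sup_le (S.le k) (S.isExpOne k).1.comap_le

lemma measurable_jumpTime_succ (k : ℕ) :
    Measurable[H k ⊔ MeasurableSpace.comap (e k) inferInstance] (jumpTime c e (k + 1)) := by
  let _ : MeasurableSpace Ω := H k ⊔ MeasurableSpace.comap (e k) inferInstance
  exact measurable_arrivalTime_succ S.rate S.clock_pos
    (fun t => (S.measurable_jumpHazard k t).mono le_sup_left le_rfl)
    ((comap_measurable (e k)).mono le_sup_right le_rfl)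

lemma measurable_jump {h : ℝ → ℝ} (hh : Measurable h) (k : ℕ) (t : ℝ) :
    Measurable[H (k + 1)] fun ω => if jumpTime c e (k + 1) ω ≤ t then h (J k ω) else 0 :=
  Measurable.ite (S.measurable_jumpTime (k + 1) measurableSet_Iic) (hh.comp (S.measurable_mark k))
    (@measurable_const _ _ _ (H (k + 1)) _)

lemma usualConditions : UsualConditions μ (jumpFiltration m0 H (jumpTime c e)) :=
  usualConditions_jumpFiltration S.le fun k s hs =>
    S.mono k.zero_le _ (S.measurableSet_of_null s hs)

lemma measurableSet_jumpTime_le (k : ℕ) (t : ℝ) :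
    MeasurableSet[jumpFiltration m0 H (jumpTime c e) t] {ω | jumpTime c e k ω ≤ t} := by
  have hmeas : MeasurableSet {ω | jumpTime c e k ω ≤ t} :=
    S.measurable_jumpTime' k measurableSet_Iic
  rcases lt_or_ge t 0 with ht | ht
  · rwa [jumpFiltration_of_neg ht]
  rw [jumpFiltration_of_nonneg ht]
  refine ⟨hmeas, fun j => ?_⟩
  rcases le_or_gt k j with hkj | hkj
  · exact ⟨{ω | jumpTime c e k ω ≤ t},
      S.mono hkj _ (S.measurable_jumpTime k measurableSet_Iic), fun _ _ => Iff.rfl⟩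
  · refine ⟨∅, @MeasurableSet.empty _ (H j), fun ω hω => ?_⟩
    simpa using hω.trans_le ((S.strictMono_jumpTime ω).monotone hkj)

lemma integrable_mark {h : ℝ → ℝ} (hh : Measurable h) (hi : Integrable h ν) (k : ℕ) :
    Integrable (fun ω => h (J k ω)) μ := by
  rw [← S.map_mark k] at hi
  exact (integrable_map_measure hh.aestronglyMeasurable (S.measurable_mark' k).aemeasurable).1 hi

variable [IsProbabilityMeasure μ]

lemma adapted_of_eq_before_jump {t : ℝ} (ht : 0 ≤ t) {Y : Ω → ℝ} {Z : ℕ → Ω → ℝ}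
    (hZ : ∀ k, Measurable[H k] (Z k)) (hYZ : ∀ k ω, t < jumpTime c e (k + 1) ω → Y ω = Z k ω) :
    Measurable[jumpFiltration m0 H (jumpTime c e) t] Y := by
  refine measurable_jumpFiltration S.le S.measurable_jumpTime'
    (fun s hs => S.le 0 _ (S.measurableSet_of_null s hs)) ht ?_ hZ hYZ
  filter_upwards [S.ae_tendsto_jumpTime] with ω hω
  exact ((hω.comp (tendsto_add_atTop_nat 1)).eventually_gt_atTop t).exists

section Mark

variable {k : ℕ} {D : Set Ω}
  (hD : MeasurableSet[H k ⊔ MeasurableSpace.comap (e k) inferInstance] D)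
include hD

lemma setLIntegral_mark {φ : ℝ → ℝ≥0∞} (hφ : Measurable φ) :
    ∫⁻ ω in D, φ (J k ω) ∂μ = (∫⁻ x, φ x ∂ν) * μ D := by
  have hsnd : Measurable[(H k ⊔ MeasurableSpace.comap (e k) inferInstance).prod inferInstance]
      fun p : Ω × ℝ => φ p.2 := by
    let _ : MeasurableSpace Ω := H k ⊔ MeasurableSpace.comap (e k) inferInstance
    exact hφ.comp measurable_snd
  rw [← S.map_mark k, lintegral_map hφ (S.measurable_mark' k)]
  exact (setLIntegral_comp_of_indep (S.sup_comap_clock_le k) (S.measurable_mark' k)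
    (S.indep_mark k).symm hD hsnd).trans
    (setLIntegral_const D (∫⁻ ω, φ (J k ω) ∂μ))

lemma setIntegral_mark {h : ℝ → ℝ} (hh : Measurable h) (hi : Integrable h ν) :
    ∫ ω in D, h (J k ω) ∂μ = μ.real D * ∫ x, h x ∂ν := by
  have hle := S.sup_comap_clock_le k
  have hcond := condExp_indep_eq (S.measurable_mark' k).comap_le hle
    (hh.comp (comap_measurable (J k))).stronglyMeasurable (S.indep_mark k)
  rw [← setIntegral_condExp hle (S.integrable_mark hh hi k) hD,
    setIntegral_congr_ae (g := fun _ => ∫ ω, h (J k ω) ∂μ) (hle _ hD)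
      (by filter_upwards [hcond] with ω hω _ using hω), setIntegral_const, ← S.map_mark k,
    integral_map (S.measurable_mark' k).aemeasurable hh.aestronglyMeasurable, smul_eq_mul]

end Mark

lemma lintegral_enorm_jump {h : ℝ → ℝ} (hh : Measurable h) (k : ℕ) (t : ℝ) :
    ∫⁻ ω, ‖if jumpTime c e (k + 1) ω ≤ t then h (J k ω) else 0‖ₑ ∂μ =
      (∫⁻ x, ‖h x‖ₑ ∂ν) * μ {ω | jumpTime c e (k + 1) ω ≤ t} := by
  change _ = _ * μ (jumpTime c e (k + 1) ⁻¹' Iic t)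
  rw [← S.setLIntegral_mark (S.measurable_jumpTime_succ k measurableSet_Iic) hh.enorm,
    ← lintegral_indicator (S.measurable_jumpTime' (k + 1) measurableSet_Iic)]
  refine lintegral_congr fun ω => ?_
  by_cases hω : jumpTime c e (k + 1) ω ≤ t <;> simp [indicator, hω]

lemma lintegral_enorm_min_jumpHazard (k : ℕ) (t : ℝ) :
    ∫⁻ ω, ‖min (jumpHazard c e k t ω) (e k ω)‖ₑ ∂μ = μ {ω | jumpTime c e (k + 1) ω ≤ t} := by
  simp_rw [Real.enorm_of_nonneg (S.min_jumpHazard_nonneg k t _)]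
  simpa using (S.measure_inter_jumpTime_succ_le k t (B := univ) MeasurableSet.univ).symm

lemma integrable_min_jumpHazard (k : ℕ) (t : ℝ) :
    Integrable (fun ω => min (jumpHazard c e k t ω) (e k ω)) μ :=
  ⟨(S.measurable_min_jumpHazard k t).aestronglyMeasurable, by
    rw [HasFiniteIntegral, S.lintegral_enorm_min_jumpHazard]; exact measure_lt_top _ _⟩

section Compensated

variable {h : ℝ → ℝ} (hh : Measurable h)
include hh

lemma adapted_tsum_compensatedJump (m : ℝ) {t : ℝ} (ht : 0 ≤ t) :
    Measurable[jumpFiltration m0 H (jumpTime c e) t]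
      fun ω => ∑' k, compensatedJump c e J h m k t ω := by
  refine S.adapted_of_eq_before_jump ht (Z := fun j ω =>
    ∑ k ∈ Finset.range j, compensatedJump c e J h m k t ω - m * jumpHazard c e j t ω)
    (fun j => ?_) fun j ω hω => ?_
  · let _ : MeasurableSpace Ω := H j
    refine Measurable.sub (Finset.measurable_sum _ fun k hk => ?_)
      ((S.measurable_jumpHazard j t).const_mul m)
    have hk := Finset.mem_range.1 hk
    refine ((S.measurable_jump hh k t).mono (S.mono hk) le_rfl).sub (Measurable.const_mul ?_ m)
    exact ((S.measurable_jumpHazard k t).mono (S.mono hk.le) le_rfl).min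
      ((S.measurable_clock k).mono (S.mono hk) le_rfl)
  · have hlt : jumpHazard c e j t ω < e j ω :=
      not_le.1 ((S.jumpTime_succ_le_iff j t ω).not.1 hω.not_ge)
    rw [tsum_eq_sum (s := Finset.range (j + 1)), Finset.sum_range_succ, sub_eq_add_neg]
    · simp [compensatedJump, hω.not_ge, min_eq_left hlt.le]
    · intro k hk
      have hk : j + 1 ≤ k := by simpa using hk
      have hk1 : t < jumpTime c e k ω := hω.trans_le ((S.strictMono_jumpTime ω).monotone hk)
      have hk2 : t < jumpTime c e (k + 1) ω := hk1.trans (S.strictMono_jumpTime ω k.lt_succ_self)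
      have hzero : jumpHazard c e k t ω = 0 := cumHazard_of_le hk1.le
      simp [compensatedJump, hk2.not_ge, hzero, (S.clock_pos k ω).le]

variable (hi : Integrable h ν)
include hi

lemma integrable_jump (k : ℕ) (t : ℝ) :
    Integrable (fun ω => if jumpTime c e (k + 1) ω ≤ t then h (J k ω) else 0) μ :=
  ⟨((S.measurable_jump hh k t).mono (S.le _) le_rfl).aestronglyMeasurable, by
    rw [HasFiniteIntegral, S.lintegral_enorm_jump hh]
    exact ENNReal.mul_lt_top hi.2 (measure_lt_top _ _)⟩

lemma integrable_compensatedJump (m : ℝ) (k : ℕ) (t : ℝ) :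
    Integrable (compensatedJump c e J h m k t) μ :=
  (S.integrable_jump hh hi k t).sub ((S.integrable_min_jumpHazard k t).const_mul m)

lemma tsum_lintegral_enorm_compensatedJump_ne_top (m : ℝ) {t : ℝ} (ht : 0 ≤ t) :
    ∑' k, ∫⁻ ω, ‖compensatedJump c e J h m k t ω‖ₑ ∂μ ≠ ∞ := by
  have term_le : ∀ k, ∫⁻ ω, ‖compensatedJump c e J h m k t ω‖ₑ ∂μ ≤
      (∫⁻ x, ‖h x‖ₑ ∂ν + ‖m‖ₑ) * μ {ω | jumpTime c e (k + 1) ω ≤ t} := by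
    intro k
    calc ∫⁻ ω, ‖compensatedJump c e J h m k t ω‖ₑ ∂μ
        ≤ ∫⁻ ω, ‖if jumpTime c e (k + 1) ω ≤ t then h (J k ω) else 0‖ₑ +
            ‖m‖ₑ * ‖min (jumpHazard c e k t ω) (e k ω)‖ₑ ∂μ :=
          lintegral_mono fun ω => enorm_sub_le.trans_eq (by rw [enorm_mul])
      _ = (∫⁻ x, ‖h x‖ₑ ∂ν + ‖m‖ₑ) * μ {ω | jumpTime c e (k + 1) ω ≤ t} := by
          have hmin := (S.measurable_min_jumpHazard k t).enorm
          rw [lintegral_add_right _ (hmin.const_mul _), lintegral_const_mul _ hmin,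
            S.lintegral_enorm_min_jumpHazard, S.lintegral_enorm_jump hh, add_mul]
  refine ne_top_of_le_ne_top ?_ (ENNReal.tsum_le_tsum term_le)
  rw [ENNReal.tsum_mul_left]
  exact ENNReal.mul_ne_top (ENNReal.add_ne_top.2 ⟨hi.2.ne, enorm_ne_top⟩)
    (ne_top_of_le_ne_top ENNReal.ofReal_ne_top (S.tsum_measure_jumpTime_succ_le ht))

end Compensated

section Increment

variable {k : ℕ} {s t : ℝ} {A B : Set Ω} (hst : s ≤ t) (hA : MeasurableSet A)
  (hB : MeasurableSet[H k] B) (hAB : ∀ ω, s < jumpTime c e (k + 1) ω → (ω ∈ A ↔ ω ∈ B))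
include hst hB

lemma setIntegral_jump_sub {h : ℝ → ℝ} (hh : Measurable h) (hi : Integrable h ν)
    (hAB : ∀ ω, s < jumpTime c e (k + 1) ω → (ω ∈ A ↔ ω ∈ B)) :
    ∫ ω in A, (if jumpTime c e (k + 1) ω ≤ t then h (J k ω) else 0) ∂μ -
      ∫ ω in A, (if jumpTime c e (k + 1) ω ≤ s then h (J k ω) else 0) ∂μ =
    μ.real (B ∩ jumpTime c e (k + 1) ⁻¹' Ioc s t) * ∫ x, h x ∂ν := by
  set D := jumpTime c e (k + 1) ⁻¹' Ioc s t
  have hD := S.measurable_jumpTime_succ k (measurableSet_Ioc (a := s) (b := t))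
  have hBD : MeasurableSet[H k ⊔ MeasurableSpace.comap (e k) inferInstance] (B ∩ D) :=
    MeasurableSet.inter (le_sup_left (a := H k) _ hB) hD
  have hADB : A ∩ D = B ∩ D := by
    ext ω
    exact and_congr_left fun hω => hAB ω hω.1
  rw [← integral_sub (S.integrable_jump hh hi k t).integrableOn
    (S.integrable_jump hh hi k s).integrableOn, ← S.setIntegral_mark hBD hh hi, ← hADB,
    ← setIntegral_indicator (S.sup_comap_clock_le k _ hD)]
  refine integral_congr_ae (ae_of_all _ fun ω => ?_)
  by_cases hs : jumpTime c e (k + 1) ω ≤ s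
  · simp [indicator, hs, hs.trans hst, hs.not_gt]
  · by_cases ht : jumpTime c e (k + 1) ω ≤ t <;> simp [indicator, hs, ht, not_le.1 hs]

lemma measureReal_inter_jumpTime_Ioc :
    μ.real (B ∩ jumpTime c e (k + 1) ⁻¹' Ioc s t) =
      ∫ ω in B, min (jumpHazard c e k t ω) (e k ω) ∂μ -
        ∫ ω in B, min (jumpHazard c e k s ω) (e k ω) ∂μ := by
  have measure_eq : ∀ r, μ.real (B ∩ jumpTime c e (k + 1) ⁻¹' Iic r) =
      ∫ ω in B, min (jumpHazard c e k r ω) (e k ω) ∂μ := fun r => by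
    change μ.real (B ∩ {ω | jumpTime c e (k + 1) ω ≤ r}) = _
    rw [Measure.real, S.measure_inter_jumpTime_succ_le k r hB, integral_eq_lintegral_of_nonneg_ae
      (ae_of_all _ fun ω => S.min_jumpHazard_nonneg k r ω)
      (S.measurable_min_jumpHazard k r).aestronglyMeasurable]
  rw [← measure_eq, ← measure_eq, ← measureReal_sdiff
    (inter_subset_inter_right _ (preimage_mono (Iic_subset_Iic.2 hst)))
    ((S.le k _ hB).inter (S.measurable_jumpTime' (k + 1) measurableSet_Iic)),
    ← inter_sdiff_distrib_left, ← preimage_sdiff, Iic_sdiff_Iic]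

include hA hAB

lemma setIntegral_min_jumpHazard_sub_congr :
    ∫ ω in A, min (jumpHazard c e k t ω) (e k ω) ∂μ -
      ∫ ω in A, min (jumpHazard c e k s ω) (e k ω) ∂μ =
    ∫ ω in B, min (jumpHazard c e k t ω) (e k ω) ∂μ -
      ∫ ω in B, min (jumpHazard c e k s ω) (e k ω) ∂μ := by
  have hint := S.integrable_min_jumpHazard k
  have hB0 : MeasurableSet B := S.le k _ hB
  rw [← integral_sub (hint t).integrableOn (hint s).integrableOn,
    ← integral_sub (hint t).integrableOn (hint s).integrableOn, ← integral_indicator hB0,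
    ← integral_indicator hA]
  refine integral_congr_ae (ae_of_all _ fun ω => ?_)
  by_cases hs : jumpTime c e (k + 1) ω ≤ s
  · have increment_eq_zero :
        min (jumpHazard c e k t ω) (e k ω) - min (jumpHazard c e k s ω) (e k ω) = 0 := by
      rw [min_eq_right ((S.jumpTime_succ_le_iff k s ω).1 hs),
        min_eq_right ((S.jumpTime_succ_le_iff k t ω).1 (hs.trans hst)), sub_self]
    simp [indicator, increment_eq_zero]
  · by_cases hω : ω ∈ B <;> simp [indicator, hAB ω (not_le.1 hs), hω]

end Increment

variable {h : ℝ → ℝ} (hh : Measurable h) (hi : Integrable h ν)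
include hh hi

lemma setIntegral_compensatedJump (k : ℕ) {s t : ℝ} (hst : s ≤ t) {A : Set Ω}
    (hA : MeasurableSet[jumpPast m0 H (jumpTime c e) s] A) :
    ∫ ω in A, compensatedJump c e J h (∫ x, h x ∂ν) k t ω ∂μ =
      ∫ ω in A, compensatedJump c e J h (∫ x, h x ∂ν) k s ω ∂μ := by
  obtain ⟨hA, hpast⟩ := hA
  obtain ⟨B, hB, hAB⟩ := hpast k
  have split : ∀ r, ∫ ω in A, compensatedJump c e J h (∫ x, h x ∂ν) k r ω ∂μ =
      ∫ ω in A, (if jumpTime c e (k + 1) ω ≤ r then h (J k ω) else 0) ∂μ -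
        (∫ x, h x ∂ν) * ∫ ω in A, min (jumpHazard c e k r ω) (e k ω) ∂μ := fun r => by
    rw [← integral_const_mul, ← integral_sub (S.integrable_jump hh hi k r).integrableOn
      ((S.integrable_min_jumpHazard k r).const_mul _).integrableOn]
    rfl
  have jumps := S.setIntegral_jump_sub hst hB hh hi hAB
  rw [S.measureReal_inter_jumpTime_Ioc hst hB,
    ← S.setIntegral_min_jumpHazard_sub_congr hst hA hB hAB] at jumps
  rw [split, split]
  linarith

theorem isMartingale_tsum_compensatedJump :
    IsMartingale μ (jumpFiltration m0 H (jumpTime c e))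
      fun t ω => ∑' k, compensatedJump c e J h (∫ x, h x ∂ν) k t ω := by
  set m := ∫ x, h x ∂ν
  have hadapted := fun t => S.adapted_tsum_compensatedJump (t := t) hh m
  have hmeas := fun k t => (S.integrable_compensatedJump hh hi m k t).aestronglyMeasurable
  have hsum := fun t => S.tsum_lintegral_enorm_compensatedJump_ne_top (t := t) hh hi m
  have hint : ∀ t : ℝ, 0 ≤ t → Integrable (fun ω => ∑' k, compensatedJump c e J h m k t ω) μ := by
    intro t ht
    refine ⟨((hadapted t ht).mono (jumpFiltration_le _) le_rfl).aestronglyMeasurable,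
      lt_of_le_of_lt ?_ (hsum t ht).lt_top⟩
    rw [← lintegral_tsum fun k => (hmeas k t).enorm]
    exact lintegral_mono fun ω => enorm_tsum_le_tsum_enorm
  refine ⟨hint, hadapted, fun s t hs hst => ?_⟩
  refine (ae_eq_condExp_of_forall_setIntegral_eq (jumpFiltration_le _) (hint t (hs.trans hst))
    (fun A _ _ => (hint s hs).integrableOn) (fun A hA _ => ?_)
    (hadapted s hs).aestronglyMeasurable).symm
  have swap : ∀ r, 0 ≤ r → ∫ ω in A, ∑' k, compensatedJump c e J h m k r ω ∂μ =
      ∑' k, ∫ ω in A, compensatedJump c e J h m k r ω ∂μ := fun r hr =>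
    integral_tsum (fun k => (hmeas k r).restrict) (ne_top_of_le_ne_top (hsum r hr)
      (ENNReal.tsum_le_tsum fun k => setLIntegral_le_lintegral _ _))
  rw [jumpFiltration_of_nonneg hs] at hA
  rw [swap s hs, swap t (hs.trans hst)]
  exact tsum_congr fun k => (S.setIntegral_compensatedJump hh hi k hst hA).symm

end IsMarkedClockModel

/-! ### Exponentially weighted time -/

/-- The measure `e^{-C t} dt` on `(0, ∞)`. -/
def expWeighted (C : ℝ) : Measure ℝ :=
  (volume.restrict (Ioi 0)).withDensity fun t => ENNReal.ofReal (Real.exp (-C * t))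

namespace expWeighted

variable {C : ℝ}

instance : SFinite (expWeighted C) := by unfold expWeighted; infer_instance

lemma lintegral_eq (C : ℝ) {φ : ℝ → ℝ≥0∞} (hφ : Measurable φ) :
    ∫⁻ t, φ t ∂expWeighted C =
      ∫⁻ t in Ioi 0, ENNReal.ofReal (Real.exp (-C * t)) * φ t := by
  rw [expWeighted, lintegral_withDensity_eq_lintegral_mul _ (by fun_prop) hφ]
  rfl

lemma isFiniteMeasure (hC : 0 < C) : IsFiniteMeasure (expWeighted C) :=
  isFiniteMeasure_withDensity_ofReal (integrableOn_exp_mul_Ioi (by linarith) 0).2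

lemma measure_Ici (hC : 0 < C) {s : ℝ} (hs : 0 < s) :
    expWeighted C (Ici s) = ENNReal.ofReal (1 / C) * ENNReal.ofReal (Real.exp (-C * s)) := by
  rw [expWeighted, withDensity_apply _ measurableSet_Ici,
    Measure.restrict_restrict measurableSet_Ici, inter_eq_left.2 (Ici_subset_Ioi.2 hs),
    ← restrict_Ioi_eq_restrict_Ici,
    ← ofReal_integral_eq_lintegral_ofReal (integrableOn_exp_mul_Ioi (by linarith) s)
      (ae_of_all _ fun _ => (Real.exp_pos _).le),
    integral_exp_mul_Ioi (by linarith) s, ← ENNReal.ofReal_mul (by positivity)]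
  congr 1
  field_simp

lemma lintegral_setLIntegral_Ioc (hC : 0 < C) {φ : ℝ → ℝ≥0∞} (hφ : Measurable φ) :
    ∫⁻ t, (∫⁻ s in Ioc 0 t, φ s) ∂expWeighted C =
      ENNReal.ofReal (1 / C) * ∫⁻ s, φ s ∂expWeighted C := by
  have hm : Measurable fun p : ℝ × ℝ => (Iic p.1).indicator φ p.2 :=
    (hφ.comp measurable_snd).indicator (measurableSet_le measurable_snd measurable_fst)
  calc ∫⁻ t, (∫⁻ s in Ioc 0 t, φ s) ∂expWeighted C
      = ∫⁻ t, (∫⁻ s in Ioi 0, (Iic t).indicator φ s) ∂expWeighted C := by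
        refine lintegral_congr fun t => ?_
        rw [lintegral_indicator measurableSet_Iic, Measure.restrict_restrict measurableSet_Iic,
          inter_comm, Ioi_inter_Iic]
    _ = ∫⁻ s in Ioi 0, ∫⁻ t, (Ici s).indicator (fun _ => φ s) t ∂expWeighted C :=
        lintegral_lintegral_swap hm.aemeasurable
    _ = ∫⁻ s in Ioi 0,
          ENNReal.ofReal (1 / C) * (ENNReal.ofReal (Real.exp (-C * s)) * φ s) := by
        refine setLIntegral_congr_fun measurableSet_Ioi fun s hs => ?_
        simp only [lintegral_indicator_const measurableSet_Ici, measure_Ici hC hs]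
        ring
    _ = ENNReal.ofReal (1 / C) * ∫⁻ s, φ s ∂expWeighted C := by
        rw [lintegral_const_mul _ (by fun_prop), lintegral_eq _ hφ]

lemma setLIntegral_Ioc_le (hC : 0 < C) {φ : ℝ → ℝ≥0∞} (hφ : Measurable φ) (t : ℝ) :
    ∫⁻ s in Ioc 0 t, φ s ≤ ENNReal.ofReal (Real.exp (C * t)) * ∫⁻ s, φ s ∂expWeighted C := by
  rw [lintegral_eq _ hφ, ← lintegral_const_mul' _ _ ENNReal.ofReal_ne_top]
  refine le_trans ?_ (lintegral_mono_set (s := Ioc 0 t) Ioc_subset_Ioi_self)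
  refine setLIntegral_mono (by fun_prop) fun s hs => ?_
  rw [← mul_assoc, ← ENNReal.ofReal_mul (Real.exp_pos _).le, ← Real.exp_add]
  refine le_mul_of_one_le_left' (ENNReal.one_le_ofReal.2 (Real.one_le_exp ?_))
  nlinarith [hs.2]

lemma integrableOn_Ioc (hC : 0 < C) {φ : ℝ → ℝ} (hφ : Measurable φ)
    (h : Integrable φ (expWeighted C)) (t : ℝ) : IntegrableOn φ (Ioc 0 t) :=
  ⟨hφ.aestronglyMeasurable, (setLIntegral_Ioc_le hC hφ.enorm t).trans_lt
    (ENNReal.mul_lt_top ENNReal.ofReal_lt_top h.2)⟩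

end expWeighted

/-! ### The forward equation of a counting process -/

section Flow

variable {m0 : MeasurableSpace Ω}

/-- The measure on pairs (sample point, number of jumps). -/
abbrev stateMeasure (μ : Measure Ω) : Measure (Ω × ℕ) := μ.prod Measure.count

/-- The measure on triples (time, sample point, number of jumps) in which the forward equation is
solved. -/
abbrev weightedStateMeasure (C : ℝ) (μ : Measure Ω) : Measure (ℝ × (Ω × ℕ)) :=
  (expWeighted C).prod (stateMeasure μ)

/-- The inflow `v (s, ω, k - 1)` into the state `k`, which vanishes for `k = 0`. -/
def countShift (v : ℝ × (Ω × ℕ) → ℝ) (p : ℝ × (Ω × ℕ)) : ℝ :=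
  if p.2.2 = 0 then 0 else v (p.1, (p.2.1, p.2.2 - 1))

/-- Inflow minus outflow of each state, accumulated up to the given time, when `v` is the rate of
flow from `k` to `k + 1`. -/
def netFlow (v : ℝ × (Ω × ℕ) → ℝ) (p : ℝ × (Ω × ℕ)) : ℝ :=
  ∫ s in Ioc 0 p.1, (countShift v (s, p.2) - v (s, p.2))

/-- Unit mass in the state without jumps. -/
def initialState (p : ℝ × (Ω × ℕ)) : ℝ := if p.2.2 = 0 then 1 else 0

variable {v w : ℝ × (Ω × ℕ) → ℝ} {C : ℝ} {μ : Measure Ω}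

lemma integrable_initialState (hC : 0 < C) [IsFiniteMeasure μ] :
    Integrable initialState (weightedStateMeasure C μ) := by
  have := expWeighted.isFiniteMeasure hC
  have unit_mass : Integrable (fun k : ℕ => if k = 0 then (1 : ℝ) else 0) Measure.count :=
    integrable_count_iff.2 (hasSum_ite_eq (0 : ℕ) (1 : ℝ)).summable.norm
  exact (unit_mass.comp_snd μ).comp_snd (expWeighted C)

lemma measurable_countShift (hv : Measurable v) : Measurable (countShift v) := by
  refine Measurable.ite ((measurable_snd.comp measurable_snd) (measurableSet_singleton 0))
    measurable_const (hv.comp (measurable_fst.prodMk ((measurable_fst.comp measurable_snd).prodMk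
      ((measurable_of_countable fun n : ℕ => n - 1).comp (measurable_snd.comp measurable_snd)))))

lemma measurable_netFlow (hv : Measurable v) : Measurable (netFlow v) := by
  have hm : Measurable fun q : (ℝ × (Ω × ℕ)) × ℝ => (q.2, q.1.2) := by fun_prop
  have hind : Measurable fun q : (ℝ × (Ω × ℕ)) × ℝ =>
      (Ioc 0 q.1.1).indicator (fun s => countShift v (s, q.1.2) - v (s, q.1.2)) q.2 :=
    (((measurable_countShift hv).comp hm).sub (hv.comp hm)).indicator
      ((measurableSet_lt measurable_const measurable_snd).inter
        (measurableSet_le measurable_snd (measurable_fst.comp measurable_fst)))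
  unfold netFlow
  simp_rw [← integral_indicator measurableSet_Ioc]
  exact (hind.stronglyMeasurable.integral_prod_right').measurable

lemma lintegral_enorm_countShift [SFinite μ] (hv : Measurable v) :
    ∫⁻ p, ‖countShift v p‖ₑ ∂weightedStateMeasure C μ =
      ∫⁻ p, ‖v p‖ₑ ∂weightedStateMeasure C μ := by
  have iterated : ∀ {w : ℝ × (Ω × ℕ) → ℝ}, Measurable w → ∫⁻ p, ‖w p‖ₑ ∂weightedStateMeasure C μ =
      ∫⁻ s, ∫⁻ ω, ∑' k, ‖w (s, (ω, k))‖ₑ ∂μ ∂expWeighted C := fun {w} hw => by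
    rw [lintegral_prod _ hw.enorm.aemeasurable]
    refine lintegral_congr fun s => ?_
    rw [lintegral_prod (fun y => ‖w (s, y)‖ₑ) (hw.enorm.comp measurable_prodMk_left).aemeasurable]
    simp_rw [lintegral_count]
  rw [iterated (measurable_countShift hv), iterated hv]
  refine lintegral_congr fun s => lintegral_congr fun ω => ?_
  rw [tsum_eq_zero_add' ENNReal.summable]
  simp [countShift]

lemma integrable_countShift [SFinite μ] (hv : Measurable v)
    (hi : Integrable v (weightedStateMeasure C μ)) :
    Integrable (countShift v) (weightedStateMeasure C μ) :=
  ⟨(measurable_countShift hv).aestronglyMeasurable,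
    (lintegral_enorm_countShift hv).trans_lt hi.2⟩

lemma lintegral_enorm_netFlow_le [SFinite μ] (hC : 0 < C) (hv : Measurable v) :
    ∫⁻ p, ‖netFlow v p‖ₑ ∂weightedStateMeasure C μ ≤
      ENNReal.ofReal (2 / C) * ∫⁻ p, ‖v p‖ₑ ∂weightedStateMeasure C μ := by
  have hm : Measurable fun p => ‖countShift v p‖ₑ + ‖v p‖ₑ :=
    (measurable_countShift hv).enorm.add hv.enorm
  calc ∫⁻ p, ‖netFlow v p‖ₑ ∂weightedStateMeasure C μ
      = ∫⁻ y, ∫⁻ t, ‖netFlow v (t, y)‖ₑ ∂expWeighted C ∂stateMeasure μ :=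
        lintegral_prod_symm _ (measurable_netFlow hv).enorm.aemeasurable
    _ ≤ ∫⁻ y, ∫⁻ t, (∫⁻ s in Ioc 0 t, (‖countShift v (s, y)‖ₑ + ‖v (s, y)‖ₑ)) ∂expWeighted C
          ∂stateMeasure μ :=
        lintegral_mono fun y => lintegral_mono fun t =>
          (enorm_integral_le_lintegral_enorm _).trans (lintegral_mono fun s => enorm_sub_le)
    _ = ENNReal.ofReal (1 / C) * ∫⁻ y, ∫⁻ s, (‖countShift v (s, y)‖ₑ + ‖v (s, y)‖ₑ) ∂expWeighted C
          ∂stateMeasure μ := by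
        rw [← lintegral_const_mul _ hm.lintegral_prod_left']
        exact lintegral_congr fun y =>
          expWeighted.lintegral_setLIntegral_Ioc hC (hm.comp measurable_prodMk_right)
    _ = ENNReal.ofReal (1 / C) * (2 * ∫⁻ p, ‖v p‖ₑ ∂weightedStateMeasure C μ) := by
        rw [← lintegral_prod_symm _ hm.aemeasurable, lintegral_add_right _ hv.enorm,
          lintegral_enorm_countShift hv, two_mul]
    _ = ENNReal.ofReal (2 / C) * ∫⁻ p, ‖v p‖ₑ ∂weightedStateMeasure C μ := by
        rw [← mul_assoc, show (2 : ℝ≥0∞) = ENNReal.ofReal 2 by simp,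
          ← ENNReal.ofReal_mul (by positivity), one_div_mul_eq_div]

lemma integrable_netFlow [SFinite μ] (hC : 0 < C) (hv : Measurable v)
    (hi : Integrable v (weightedStateMeasure C μ)) :
    Integrable (netFlow v) (weightedStateMeasure C μ) :=
  ⟨(measurable_netFlow hv).aestronglyMeasurable, (lintegral_enorm_netFlow_le hC hv).trans_lt
    (ENNReal.mul_lt_top ENNReal.ofReal_lt_top hi.2)⟩

lemma ae_integrableOn_Ioc [SFinite μ] (hC : 0 < C) (hv : Measurable v)
    (hi : Integrable v (weightedStateMeasure C μ)) :
    ∀ᵐ y ∂stateMeasure μ, ∀ t, IntegrableOn (fun s => v (s, y)) (Ioc 0 t) := by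
  filter_upwards [hi.prod_left_ae] with y hy
  exact expWeighted.integrableOn_Ioc hC (hv.comp measurable_prodMk_right) hy

lemma netFlow_sub_ae_eq [SFinite μ] (hC : 0 < C) (hv : Measurable v) (hw : Measurable w)
    (hvi : Integrable v (weightedStateMeasure C μ))
    (hwi : Integrable w (weightedStateMeasure C μ)) :
    ∀ᵐ p ∂weightedStateMeasure C μ,
      netFlow v p - netFlow w p = netFlow (fun q => v q - w q) p := by
  have netInflow_integrable : ∀ {u : ℝ × (Ω × ℕ) → ℝ}, Measurable u →
      Integrable u (weightedStateMeasure C μ) → ∀ᵐ y ∂stateMeasure μ, ∀ t,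
        IntegrableOn (fun s => countShift u (s, y) - u (s, y)) (Ioc 0 t) := fun hu hui =>
    ae_integrableOn_Ioc hC ((measurable_countShift hu).sub hu)
      ((integrable_countShift hu hui).sub hui)
  filter_upwards [Measure.quasiMeasurePreserving_snd.ae (netInflow_integrable hv hvi),
    Measure.quasiMeasurePreserving_snd.ae (netInflow_integrable hw hwi)] with p hvp hwp
  unfold netFlow
  rw [← integral_sub (hvp p.1) (hwp p.1)]
  congr 1
  ext s
  simp only [countShift]
  split_ifs <;> ring

lemma lintegral_enorm_sub_le_of_ae_eq_add_netFlow [SFinite μ] (hC : 0 < C) {a f g : ℝ × (Ω × ℕ) → ℝ}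
    (hv : Measurable v) (hw : Measurable w) (hvi : Integrable v (weightedStateMeasure C μ))
    (hwi : Integrable w (weightedStateMeasure C μ))
    (hf : ∀ᵐ p ∂weightedStateMeasure C μ, f p = a p + netFlow v p)
    (hg : ∀ᵐ p ∂weightedStateMeasure C μ, g p = a p + netFlow w p) :
    ∫⁻ p, ‖f p - g p‖ₑ ∂weightedStateMeasure C μ ≤
      ENNReal.ofReal (2 / C) * ∫⁻ p, ‖v p - w p‖ₑ ∂weightedStateMeasure C μ := by
  refine le_trans (le_of_eq (lintegral_congr_ae ?_))
    (lintegral_enorm_netFlow_le hC (hv.sub hw))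
  filter_upwards [hf, hg, netFlow_sub_ae_eq hC hv hw hvi hwi] with p hfp hgp hp
  rw [hfp, hgp, add_sub_add_left_eq_sub, hp]

end Flow

/-! ### Stability of weighted ratios -/

lemma abs_div_mul_sub_div_mul_le {L U θ g g' x x' : ℝ} (hL : 0 < L) (hθ : 0 ≤ θ) (hθU : θ ≤ U)
    (hg : L ≤ g) (hx' : 0 ≤ x') :
    |θ / g * x - θ / g' * x'| ≤ U / L * |x - x'| + |1 / g - 1 / g'| * (θ * x') := by
  have split : θ / g * x - θ / g' * x' =
      θ / g * (x - x') + (1 / g - 1 / g') * (θ * x') := by ring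
  have hU : 0 ≤ U := hθ.trans hθU
  rw [split]
  refine (abs_add_le _ _).trans ?_
  rw [abs_mul, abs_mul, abs_of_nonneg (div_nonneg hθ (hL.le.trans hg)),
    abs_of_nonneg (mul_nonneg hθ hx')]
  gcongr

lemma abs_one_div_sub_one_div_mul_le {L U g g' a a' D : ℝ} (hL : 0 < L) (hU : 0 ≤ U) (hg : L ≤ g)
    (hg' : 0 < g') (ha' : 0 ≤ a') (ha : |a - a'| ≤ D) (hb : |g * a - g' * a'| ≤ U * D) :
    |1 / g - 1 / g'| * (g' * a') ≤ U / L * D + D := by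
  have hg0 : 0 < g := hL.trans_le hg
  have hD : 0 ≤ D := (abs_nonneg _).trans ha
  have hdiff : 1 / g - 1 / g' = (g' - g) / (g * g') := by field_simp
  calc |1 / g - 1 / g'| * (g' * a') = |(g' * a' - g * a) + g * (a - a')| / g := by
        rw [show (g' * a' - g * a) + g * (a - a') = (g' - g) * a' by ring, hdiff, abs_div,
          abs_of_pos (mul_pos hg0 hg'), abs_mul, abs_of_nonneg ha']
        field_simp
    _ ≤ (U * D + g * D) / g := by
        gcongr
        refine (abs_add_le _ _).trans (add_le_add (by rwa [abs_sub_comm]) ?_)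
        rw [abs_mul, abs_of_pos hg0]
        gcongr
    _ = U / g * D + D := by field_simp
    _ ≤ U / L * D + D := by gcongr

section Fibre

variable {Y : Type*} {mY : MeasurableSpace Y} {κ : Measure Y} {L U : ℝ}

lemma integral_abs_div_mul_sub_le (hL : 0 < L) {f f' θ : Y → ℝ} {g g' : ℝ}
    (hf : Integrable f κ) (hf' : Integrable f' κ) (hf0' : ∀ y, 0 ≤ f' y)
    (hθ : Measurable θ) (hθ0 : ∀ y, 0 ≤ θ y) (hθU : ∀ y, θ y ≤ U) (hU : 0 ≤ U)
    (hg : L ≤ g) (hg' : 0 < g')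
    (h : g * ∫ y, f y ∂κ = ∫ y, θ y * f y ∂κ) (h' : g' * ∫ y, f' y ∂κ = ∫ y, θ y * f' y ∂κ) :
    ∫ y, |θ y / g * f y - θ y / g' * f' y| ∂κ ≤ (2 * U / L + 1) * ∫ y, |f y - f' y| ∂κ := by
  have integrable_mul : ∀ {φ : Y → ℝ}, Integrable φ κ → Integrable (fun y => θ y * φ y) κ :=
    fun hφ => hφ.bdd_mul (c := U) hθ.aestronglyMeasurable (ae_of_all _ fun y => by
      rw [Real.norm_eq_abs, abs_of_nonneg (hθ0 y)]; exact hθU y)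
  have hdiff : Integrable (fun y => |f y - f' y|) κ := (hf.sub hf').abs
  set D := ∫ y, |f y - f' y| ∂κ
  have mass : |(∫ y, f y ∂κ) - ∫ y, f' y ∂κ| ≤ D := by
    rw [← integral_sub hf hf']
    exact abs_integral_le_integral_abs
  have weightedMass : |(g * ∫ y, f y ∂κ) - g' * ∫ y, f' y ∂κ| ≤ U * D := by
    rw [h, h', ← integral_sub (integrable_mul hf) (integrable_mul hf'), ← integral_const_mul]
    refine abs_integral_le_integral_abs.trans (integral_mono_of_nonneg
      (ae_of_all _ fun _ => abs_nonneg _) (hdiff.const_mul _) (ae_of_all _ fun y => ?_))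
    simp only [← mul_sub, abs_mul, abs_of_nonneg (hθ0 y)]
    exact mul_le_mul_of_nonneg_right (hθU y) (abs_nonneg _)
  calc ∫ y, |θ y / g * f y - θ y / g' * f' y| ∂κ
      ≤ ∫ y, (U / L * |f y - f' y| + |1 / g - 1 / g'| * (θ y * f' y)) ∂κ :=
        integral_mono_of_nonneg (ae_of_all _ fun _ => abs_nonneg _)
          ((hdiff.const_mul _).add ((integrable_mul hf').const_mul _))
          (ae_of_all _ fun y => abs_div_mul_sub_div_mul_le hL (hθ0 y) (hθU y) hg (hf0' y))
    _ = U / L * D + |1 / g - 1 / g'| * (g' * ∫ y, f' y ∂κ) := by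
        rw [integral_add (hdiff.const_mul _) ((integrable_mul hf').const_mul _),
          integral_const_mul, integral_const_mul, h']
    _ ≤ U / L * D + (U / L * D + D) :=
        add_le_add_right (abs_one_div_sub_one_div_mul_le hL hU hg hg' (integral_nonneg hf0') mass
          weightedMass) _
    _ = (2 * U / L + 1) * D := by ring

lemma lintegral_le_of_fibre_le {A : Set ℝ} (hA : A.Countable) {S : Y → ℝ} (hS : Measurable S)
    (hSA : ∀ᵐ y ∂κ, S y ∈ A) {φ ψ : Y → ℝ≥0∞}
    (h : ∀ x ∈ A, ∫⁻ y in S ⁻¹' {x}, φ y ∂κ ≤ ∫⁻ y in S ⁻¹' {x}, ψ y ∂κ) :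
    ∫⁻ y, φ y ∂κ ≤ ∫⁻ y, ψ y ∂κ := by
  have sum_fibres : ∀ χ : Y → ℝ≥0∞,
      ∫⁻ y, χ y ∂κ = ∑' x : A, ∫⁻ y in S ⁻¹' {x.1}, χ y ∂κ := fun χ => by
    rw [← lintegral_biUnion hA (fun x _ => hS (measurableSet_singleton x))
      fun x _ y _ hxy => Disjoint.preimage _ (by simpa using hxy), ← setLIntegral_univ]
    refine setLIntegral_congr ?_
    filter_upwards [hSA] with y hy
    exact propext ⟨fun _ => mem_biUnion hy rfl, fun _ => trivial⟩
  rw [sum_fibres, sum_fibres]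
  exact ENNReal.tsum_le_tsum fun x => h x.1 x.2

end Fibre

/-! ### The nonlinear forward equation -/

/-- The data of the forward equation for the jump counts given the past: after `k` jumps the
process sits at `site k`, and at time `s` it leaves the site `x` at rate
`weight s * lam s x / g s x`, where `g` is the conditional mean of the weight at `x`. -/
structure ForwardProblem {m0 : MeasurableSpace Ω} (μ : Measure Ω) (L U : ℝ) where
  site : ℕ → Ω → ℝ
  weight : ℝ → Ω → ℝ
  lam : ℝ → ℝ → ℝ
  lo_pos : 0 < L
  measurable_site : ∀ k, Measurable (site k)
  exists_countable : ∃ A : Set ℝ, A.Countable ∧ ∀ k, ∀ᵐ ω ∂μ, site k ω ∈ A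
  measurable_weight : Measurable fun p : ℝ × Ω => weight p.1 p.2
  weight_mem : ∀ s ω, weight s ω ∈ Icc L U
  measurable_lam : Measurable fun p : ℝ × ℝ => lam p.1 p.2
  lam_mem : ∀ s x, lam s x ∈ Icc L U

/-- The time weight for which the forward operator contracts distances by the factor `1 / 2`. -/
def contractionWeight (L U : ℝ) : ℝ := 4 * (U * (2 * U / L + 1))

namespace ForwardProblem

variable {m0 : MeasurableSpace Ω} {μ : Measure Ω} {L U : ℝ} (P : ForwardProblem μ L U)

/-- The integral of `φ s` over the states located at `x`. -/
def siteIntegral (φ : ℝ × (Ω × ℕ) → ℝ) (s x : ℝ) : ℝ :=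
  ∫ y in {y : Ω × ℕ | P.site y.2 y.1 = x}, φ (s, y) ∂stateMeasure μ

/-- The mean of the weight over the states located at `x` under the density `max f 0`, clamped to
`[L, U]` so that the definition is also meaningful at sites without mass. -/
def ratio (f : ℝ × (Ω × ℕ) → ℝ) (s x : ℝ) : ℝ :=
  max L (min U (P.siteIntegral (fun p => P.weight p.1 p.2.1 * max (f p) 0) s x /
    P.siteIntegral (fun p => max (f p) 0) s x))

/-- The jump rate `weight * lam / g` out of a state. -/
def intensity (g : ℝ → ℝ → ℝ) (p : ℝ × (Ω × ℕ)) : ℝ :=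
  P.weight p.1 p.2.1 * P.lam p.1 (P.site p.2.2 p.2.1) / g p.1 (P.site p.2.2 p.2.1)

/-- The nonlinear rate of flow out of each state under the density `max f 0`. -/
def flux (f : ℝ × (Ω × ℕ) → ℝ) (p : ℝ × (Ω × ℕ)) : ℝ :=
  P.intensity (P.ratio f) p * max (f p) 0

/-- The operator whose fixed points are the solutions of the forward equation. -/
def forwardOperator (f : ℝ × (Ω × ℕ) → ℝ) (p : ℝ × (Ω × ℕ)) : ℝ :=
  initialState p + netFlow (P.flux f) p

/-- A weighted-integrable solution of the nonlinear forward equation. -/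
structure IsSolution (f : ℝ × (Ω × ℕ) → ℝ) : Prop where
  measurable : Measurable f
  integrable : Integrable f (weightedStateMeasure (contractionWeight L U) μ)
  ae_eq : f =ᵐ[weightedStateMeasure (contractionWeight L U) μ] P.forwardOperator f

include P in
lemma up_pos : 0 < U := P.lo_pos.trans_le ((P.lam_mem 0 0).1.trans (P.lam_mem 0 0).2)

include P in
lemma contractionWeight_pos : 0 < contractionWeight L U := by
  have := P.lo_pos
  have := P.up_pos
  unfold contractionWeight
  positivity

lemma weight_nonneg (s : ℝ) (ω : Ω) : 0 ≤ P.weight s ω := P.lo_pos.le.trans (P.weight_mem s ω).1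

lemma ratio_mem (f : ℝ × (Ω × ℕ) → ℝ) (s x : ℝ) : P.ratio f s x ∈ Icc L U :=
  ⟨le_max_left _ _, max_le ((P.lam_mem 0 0).1.trans (P.lam_mem 0 0).2) (min_le_left _ _)⟩

lemma intensity_mem {g : ℝ → ℝ → ℝ} (hg : ∀ s x, g s x ∈ Icc L U) (p : ℝ × (Ω × ℕ)) :
    P.intensity g p ∈ Icc (L ^ 2 / U) (U ^ 2 / L) := by
  have hL := P.lo_pos
  have hU := P.up_pos
  obtain ⟨hLg, hgU⟩ := hg p.1 (P.site p.2.2 p.2.1)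
  obtain ⟨hLw, hwU⟩ := P.weight_mem p.1 p.2.1
  obtain ⟨hLlam, hlamU⟩ := P.lam_mem p.1 (P.site p.2.2 p.2.1)
  have hlam := hL.le.trans hLlam
  rw [sq, sq]
  exact ⟨div_le_div₀ (mul_nonneg (hL.le.trans hLw) hlam) (mul_le_mul hLw hLlam hL.le
      (hL.le.trans hLw)) (hL.trans_le hLg) hgU,
    div_le_div₀ (by positivity) (mul_le_mul hwU hlamU hlam hU.le) hL hLg⟩

lemma abs_intensity_le {g : ℝ → ℝ → ℝ} (hg : ∀ s x, g s x ∈ Icc L U) (p : ℝ × (Ω × ℕ)) :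
    |P.intensity g p| ≤ U ^ 2 / L := by
  have hL := P.lo_pos
  have hU := P.up_pos
  obtain ⟨lower, upper⟩ := P.intensity_mem hg p
  rwa [abs_of_nonneg ((by positivity : 0 ≤ L ^ 2 / U).trans lower)]

lemma measurable_site_uncurry : Measurable fun y : Ω × ℕ => P.site y.2 y.1 :=
  measurable_from_prod_countable_left P.measurable_site

lemma measurableSet_site_eq (x : ℝ) : MeasurableSet {y : Ω × ℕ | P.site y.2 y.1 = x} :=
  P.measurable_site_uncurry (measurableSet_singleton x)

lemma measurable_weight_apply (s : ℝ) : Measurable fun y : Ω × ℕ => P.weight s y.1 :=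
  P.measurable_weight.comp (by fun_prop : Measurable fun y : Ω × ℕ => (s, y.1))

lemma measurable_weight_mul_max {f : ℝ × (Ω × ℕ) → ℝ} (hf : Measurable f) :
    Measurable fun p : ℝ × (Ω × ℕ) => P.weight p.1 p.2.1 * max (f p) 0 :=
  (P.measurable_weight.comp (by fun_prop : Measurable fun p : ℝ × (Ω × ℕ) => (p.1, p.2.1))).mul
    (hf.max measurable_const)

lemma measurable_intensity {g : ℝ → ℝ → ℝ} (hg : Measurable fun p : ℝ × ℝ => g p.1 p.2) :
    Measurable (P.intensity g) := by
  have hsite : Measurable fun p : ℝ × (Ω × ℕ) => (p.1, P.site p.2.2 p.2.1) :=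
    measurable_fst.prodMk (P.measurable_site_uncurry.comp measurable_snd)
  exact ((P.measurable_weight.comp
    (by fun_prop : Measurable fun p : ℝ × (Ω × ℕ) => (p.1, p.2.1))).mul
      (P.measurable_lam.comp hsite)).div (hg.comp hsite)

lemma integrable_weight_mul (s : ℝ) {κ : Measure (Ω × ℕ)} {φ : Ω × ℕ → ℝ} (hφ : Integrable φ κ) :
    Integrable (fun y => P.weight s y.1 * φ y) κ :=
  hφ.bdd_mul (c := U) (P.measurable_weight_apply s).aestronglyMeasurable
    (ae_of_all _ fun y => by
      rw [Real.norm_eq_abs, abs_of_nonneg (P.weight_nonneg s y.1)]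
      exact (P.weight_mem s y.1).2)

lemma ratio_mul_siteIntegral {f : ℝ × (Ω × ℕ) → ℝ} {s : ℝ}
    (hf : Integrable (fun y => f (s, y)) (stateMeasure μ)) (x : ℝ) :
    P.ratio f s x * P.siteIntegral (fun p => max (f p) 0) s x =
      P.siteIntegral (fun p => P.weight p.1 p.2.1 * max (f p) 0) s x := by
  have hpos : IntegrableOn (fun y => max (f (s, y)) 0) {y : Ω × ℕ | P.site y.2 y.1 = x}
    (stateMeasure μ) := hf.pos_part.integrableOn
  set mass := P.siteIntegral (fun p => max (f p) 0) s x with mass_def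
  set weighted := P.siteIntegral (fun p => P.weight p.1 p.2.1 * max (f p) 0) s x with weighted_def
  have lower : L * mass ≤ weighted := by
    rw [mass_def, weighted_def, siteIntegral, siteIntegral, ← integral_const_mul]
    exact integral_mono (hpos.const_mul _) (P.integrable_weight_mul s hpos) fun y =>
      mul_le_mul_of_nonneg_right (P.weight_mem _ _).1 (le_max_right _ _)
  have upper : weighted ≤ U * mass := by
    rw [mass_def, weighted_def, siteIntegral, siteIntegral, ← integral_const_mul]
    exact integral_mono (P.integrable_weight_mul s hpos) (hpos.const_mul _) fun y =>
      mul_le_mul_of_nonneg_right (P.weight_mem _ _).2 (le_max_right _ _)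
  have mass_nonneg : 0 ≤ mass := integral_nonneg fun y => le_max_right _ _
  rcases mass_nonneg.eq_or_lt with h | h
  · rw [← h] at lower upper ⊢
    linarith
  · rw [ratio, ← mass_def, ← weighted_def, min_eq_right ((div_le_iff₀ h).2 upper),
      max_eq_right ((le_div_iff₀ h).2 lower), div_mul_cancel₀ _ h.ne']

lemma ae_site_mem {A : Set ℝ} (hA : A.Countable) (h : ∀ k, ∀ᵐ ω ∂μ, P.site k ω ∈ A) :
    ∀ᵐ y ∂stateMeasure μ, P.site y.2 y.1 ∈ A := by
  rw [Measure.ae_prod_iff_ae_ae (P.measurable_site_uncurry hA.measurableSet)]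
  filter_upwards [ae_all_iff.2 h] with ω hω
  exact ae_of_all _ hω

lemma setLIntegral_enorm_weight_div_ratio_sub_le {f f' : ℝ × (Ω × ℕ) → ℝ} {s : ℝ}
    (hf : Integrable (fun y => f (s, y)) (stateMeasure μ))
    (hf' : Integrable (fun y => f' (s, y)) (stateMeasure μ)) (x : ℝ) :
    ∫⁻ y in {y : Ω × ℕ | P.site y.2 y.1 = x},
        ‖P.weight s y.1 / P.ratio f s x * max (f (s, y)) 0 -
          P.weight s y.1 / P.ratio f' s x * max (f' (s, y)) 0‖ₑ ∂stateMeasure μ ≤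
      ENNReal.ofReal (2 * U / L + 1) *
        ∫⁻ y in {y : Ω × ℕ | P.site y.2 y.1 = x}, ‖f (s, y) - f' (s, y)‖ₑ ∂stateMeasure μ := by
  have hL := P.lo_pos
  have hU := P.up_pos
  have hp := hf.pos_part.integrableOn (s := {y : Ω × ℕ | P.site y.2 y.1 = x})
  have hp' := hf'.pos_part.integrableOn (s := {y : Ω × ℕ | P.site y.2 y.1 = x})
  have hdiff : IntegrableOn (fun y => f (s, y) - f' (s, y)) {y : Ω × ℕ | P.site y.2 y.1 = x}
    (stateMeasure μ) := (hf.sub hf').integrableOn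
  have integrable_term : ∀ {φ : Ω × ℕ → ℝ} (g : ℝ), IntegrableOn φ _ (stateMeasure μ) →
      IntegrableOn (fun y => P.weight s y.1 / g * φ y) {y : Ω × ℕ | P.site y.2 y.1 = x}
        (stateMeasure μ) := fun {φ} g hφ => by
    simpa only [div_mul_eq_mul_div, IntegrableOn] using
      (P.integrable_weight_mul s hφ).div_const g
  have integrable_diff : IntegrableOn (fun y => P.weight s y.1 / P.ratio f s x * max (f (s, y)) 0 -
      P.weight s y.1 / P.ratio f' s x * max (f' (s, y)) 0) {y : Ω × ℕ | P.site y.2 y.1 = x}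
    (stateMeasure μ) := (integrable_term _ hp).sub (integrable_term _ hp')
  have stability := integral_abs_div_mul_sub_le hL hp hp' (fun _ => le_max_right _ _)
    (P.measurable_weight_apply s) (fun y => P.weight_nonneg s y.1)
    (fun y => (P.weight_mem s y.1).2) hU.le (P.ratio_mem f s x).1
    (hL.trans_le (P.ratio_mem f' s x).1) (P.ratio_mul_siteIntegral hf x)
    (P.ratio_mul_siteIntegral hf' x)
  rw [← ofReal_integral_norm_eq_lintegral_enorm hdiff, ← ENNReal.ofReal_mul (by positivity),
    ← ofReal_integral_norm_eq_lintegral_enorm integrable_diff]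
  refine ENNReal.ofReal_le_ofReal (stability.trans ?_)
  refine mul_le_mul_of_nonneg_left (integral_mono (hp.sub hp').abs hdiff.norm fun y => ?_)
    (by positivity)
  exact abs_max_sub_max_le_abs (f (s, y)) (f' (s, y)) 0

lemma lintegral_enorm_flux_sub_le {f f' : ℝ × (Ω × ℕ) → ℝ} {s : ℝ}
    (hf : Integrable (fun y => f (s, y)) (stateMeasure μ))
    (hf' : Integrable (fun y => f' (s, y)) (stateMeasure μ)) :
    ∫⁻ y, ‖P.flux f (s, y) - P.flux f' (s, y)‖ₑ ∂stateMeasure μ ≤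
      ENNReal.ofReal (U * (2 * U / L + 1)) * ∫⁻ y, ‖f (s, y) - f' (s, y)‖ₑ ∂stateMeasure μ := by
  obtain ⟨A, hA, hmem⟩ := P.exists_countable
  rw [← lintegral_const_mul' _ _ ENNReal.ofReal_ne_top]
  refine lintegral_le_of_fibre_le hA P.measurable_site_uncurry (P.ae_site_mem hA hmem)
    fun x _ => ?_
  change ∫⁻ y in {y : Ω × ℕ | P.site y.2 y.1 = x}, _ ∂_ ≤
    ∫⁻ y in {y : Ω × ℕ | P.site y.2 y.1 = x}, _ ∂_
  rw [lintegral_const_mul' _ _ ENNReal.ofReal_ne_top, ENNReal.ofReal_mul P.up_pos.le, mul_assoc]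
  refine le_trans ?_ (mul_le_mul_right
    (P.setLIntegral_enorm_weight_div_ratio_sub_le hf hf' x) (ENNReal.ofReal U))
  rw [← lintegral_const_mul' _ _ ENNReal.ofReal_ne_top]
  refine setLIntegral_mono_ae' (P.measurableSet_site_eq x) (ae_of_all _ fun y (hy : _ = x) => ?_)
  have factor : P.flux f (s, y) - P.flux f' (s, y) = P.lam s x *
      (P.weight s y.1 / P.ratio f s x * max (f (s, y)) 0 -
        P.weight s y.1 / P.ratio f' s x * max (f' (s, y)) 0) := by
    simp only [flux, intensity, hy]
    ring
  rw [factor, enorm_mul, Real.enorm_of_nonneg (P.lo_pos.le.trans (P.lam_mem s x).1)]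
  gcongr
  exact (P.lam_mem s x).2

section SFinite

variable [SFinite μ]

lemma measurable_siteIntegral {φ : ℝ × (Ω × ℕ) → ℝ} (hφ : Measurable φ) :
    Measurable fun p : ℝ × ℝ => P.siteIntegral φ p.1 p.2 := by
  have hind : Measurable fun q : (ℝ × ℝ) × (Ω × ℕ) =>
      {y : Ω × ℕ | P.site y.2 y.1 = q.1.2}.indicator (fun y => φ (q.1.1, y)) q.2 :=
    (hφ.comp (by fun_prop : Measurable fun q : (ℝ × ℝ) × (Ω × ℕ) => (q.1.1, q.2))).indicator
      (measurableSet_eq_fun (P.measurable_site_uncurry.comp measurable_snd) (by fun_prop))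
  unfold siteIntegral
  simp_rw [← integral_indicator (P.measurableSet_site_eq _)]
  exact hind.stronglyMeasurable.integral_prod_right'.measurable

section Measurable

variable {f : ℝ × (Ω × ℕ) → ℝ} (hf : Measurable f)
include hf

lemma measurable_ratio : Measurable fun p : ℝ × ℝ => P.ratio f p.1 p.2 :=
  measurable_const.max (measurable_const.min
    ((P.measurable_siteIntegral (P.measurable_weight_mul_max hf)).div
      (P.measurable_siteIntegral (hf.max measurable_const))))

lemma measurable_flux : Measurable (P.flux f) :=
  (P.measurable_intensity (P.measurable_ratio hf)).mul (hf.max measurable_const)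

lemma integrable_intensity_mul {q : ℝ × (Ω × ℕ) → ℝ} {C : ℝ}
    (hq : Integrable q (weightedStateMeasure C μ)) :
    Integrable (fun p => P.intensity (P.ratio f) p * q p) (weightedStateMeasure C μ) :=
  hq.bdd_mul (P.measurable_intensity (P.measurable_ratio hf)).aestronglyMeasurable
    (ae_of_all _ (P.abs_intensity_le (P.ratio_mem f)))

lemma integrable_flux {C : ℝ} (hi : Integrable f (weightedStateMeasure C μ)) :
    Integrable (P.flux f) (weightedStateMeasure C μ) :=
  P.integrable_intensity_mul hf hi.pos_part

lemma integrable_forwardOperator [IsFiniteMeasure μ] {C : ℝ} (hC : 0 < C)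
    (hi : Integrable f (weightedStateMeasure C μ)) :
    Integrable (P.forwardOperator f) (weightedStateMeasure C μ) :=
  (integrable_initialState hC).add
    (integrable_netFlow hC (P.measurable_flux hf) (P.integrable_flux hf hi))

end Measurable

section Contraction

variable {f f' : ℝ × (Ω × ℕ) → ℝ} {C : ℝ} (hC : 0 < C) (hf : Measurable f) (hf' : Measurable f')
  (hi : Integrable f (weightedStateMeasure C μ)) (hi' : Integrable f' (weightedStateMeasure C μ))
include hC hf hf' hi hi'

lemma lintegral_enorm_forwardOperator_sub_le :
    ∫⁻ p, ‖P.forwardOperator f p - P.forwardOperator f' p‖ₑ ∂weightedStateMeasure C μ ≤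
      ENNReal.ofReal (2 / C) * (ENNReal.ofReal (U * (2 * U / L + 1)) *
        ∫⁻ p, ‖f p - f' p‖ₑ ∂weightedStateMeasure C μ) := by
  refine (lintegral_enorm_sub_le_of_ae_eq_add_netFlow hC (P.measurable_flux hf)
    (P.measurable_flux hf') (P.integrable_flux hf hi) (P.integrable_flux hf' hi')
    (ae_of_all _ fun _ => rfl) (ae_of_all _ fun _ => rfl)).trans ?_
  gcongr
  have hm : Measurable fun p => ‖f p - f' p‖ₑ := (hf.sub hf').enorm
  have hm_flux : Measurable fun p => ‖P.flux f p - P.flux f' p‖ₑ :=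
    ((P.measurable_flux hf).sub (P.measurable_flux hf')).enorm
  rw [← lintegral_const_mul _ hm, lintegral_prod _ hm_flux.aemeasurable,
    lintegral_prod _ (hm.const_mul _).aemeasurable]
  refine lintegral_mono_ae ?_
  filter_upwards [hi.prod_right_ae, hi'.prod_right_ae] with s hs hs'
  rw [lintegral_const_mul' _ _ ENNReal.ofReal_ne_top]
  exact P.lintegral_enorm_flux_sub_le hs hs'

end Contraction

theorem exists_isSolution [IsFiniteMeasure μ] : ∃ f, P.IsSolution f := by
  have hC := P.contractionWeight_pos
  set m := weightedStateMeasure (contractionWeight L U) μ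
  have hm : ∀ f : Lp ℝ 1 m, Measurable f := fun f => (Lp.stronglyMeasurable f).measurable
  have hi : ∀ f : Lp ℝ 1 m, Integrable f m := L1.integrable_coeFn
  let Φ : Lp ℝ 1 m → Lp ℝ 1 m := fun f =>
    (memLp_one_iff_integrable.2 (P.integrable_forwardOperator (hm f) hC (hi f))).toLp
      (P.forwardOperator f)
  have contracting : ContractingWith (1 / 2) Φ := by
    refine ⟨by norm_num, fun f f' => ?_⟩
    rw [Lp.edist_toLp_toLp, Lp.edist_def, eLpNorm_one_eq_lintegral_enorm,
      eLpNorm_one_eq_lintegral_enorm]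
    refine (P.lintegral_enorm_forwardOperator_sub_le hC (hm f) (hm f') (hi f) (hi f')).trans
      (le_of_eq ?_)
    have rate : 2 / contractionWeight L U * (U * (2 * U / L + 1)) = 1 / 2 := by
      rw [contractionWeight] at hC ⊢
      generalize U * (2 * U / L + 1) = z at hC ⊢
      have hz : z ≠ 0 := (pos_of_mul_pos_right hC zero_le_four).ne'
      field_simp
      norm_num
    rw [← mul_assoc, ← ENNReal.ofReal_mul (div_nonneg zero_le_two hC.le), rate]
    congr 1
    simp
  refine ⟨contracting.fixedPoint, hm _, hi _, ?_⟩
  have fixed := MemLp.coeFn_toLp (memLp_one_iff_integrable.2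
    (P.integrable_forwardOperator (hm contracting.fixedPoint) hC (hi contracting.fixedPoint)))
  change (Φ contracting.fixedPoint : ℝ × (Ω × ℕ) → ℝ) =ᵐ[m] _ at fixed
  rwa [contracting.fixedPoint_isFixedPt.eq] at fixed

namespace IsSolution

variable {P} {f q : ℝ × (Ω × ℕ) → ℝ}

lemma lintegral_enorm_sub_le_half (hf : P.IsSolution f) (hq : Measurable q)
    (hqi : Integrable q (weightedStateMeasure (contractionWeight L U) μ)) (hq0 : ∀ p, 0 ≤ q p)
    (hqq : ∀ᵐ p ∂weightedStateMeasure (contractionWeight L U) μ,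
      q p = initialState p + netFlow (fun p => P.intensity (P.ratio f) p * q p) p) :
    ∫⁻ p, ‖f p - q p‖ₑ ∂weightedStateMeasure (contractionWeight L U) μ ≤
      ENNReal.ofReal (1 / 2) *
        ∫⁻ p, ‖f p - q p‖ₑ ∂weightedStateMeasure (contractionWeight L U) μ := by
  have hC := P.contractionWeight_pos
  have hL := P.lo_pos
  have hU := P.up_pos
  have hm := hf.measurable
  refine (lintegral_enorm_sub_le_of_ae_eq_add_netFlow hC (P.measurable_flux hm)
    ((P.measurable_intensity (P.measurable_ratio hm)).mul hq) (P.integrable_flux hm hf.integrable)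
    (P.integrable_intensity_mul hm hqi) hf.ae_eq hqq).trans ?_
  have pointwise : ∀ p, ‖P.flux f p - P.intensity (P.ratio f) p * q p‖ₑ ≤
      ENNReal.ofReal (U ^ 2 / L) * ‖f p - q p‖ₑ := fun p => by
    rw [flux, ← mul_sub, enorm_mul]
    gcongr
    · rw [Real.enorm_eq_ofReal_abs]
      exact ENNReal.ofReal_le_ofReal (P.abs_intensity_le (P.ratio_mem f) p)
    · rw [enorm_le_iff_norm_le]
      simpa only [max_eq_left (hq0 p), Real.norm_eq_abs] using abs_max_sub_max_le_abs (f p) (q p) 0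
  refine (mul_le_mul_right (lintegral_mono pointwise) _).trans ?_
  rw [lintegral_const_mul' _ _ ENNReal.ofReal_ne_top, ← mul_assoc,
    ← ENNReal.ofReal_mul (by positivity)]
  gcongr
  rw [div_mul_eq_mul_div, div_le_iff₀ hC, contractionWeight,
    show U * (2 * U / L + 1) = 2 * (U ^ 2 / L) + U by ring]
  nlinarith [show 0 < U ^ 2 / L by positivity]

theorem ae_eq_of_linear (hf : P.IsSolution f) (hq : Measurable q)
    (hqi : Integrable q (weightedStateMeasure (contractionWeight L U) μ)) (hq0 : ∀ p, 0 ≤ q p)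
    (hqq : ∀ᵐ p ∂weightedStateMeasure (contractionWeight L U) μ,
      q p = initialState p + netFlow (fun p => P.intensity (P.ratio f) p * q p) p) :
    f =ᵐ[weightedStateMeasure (contractionWeight L U) μ] q := by
  have half := hf.lintegral_enorm_sub_le_half hq hqi hq0 hqq
  have finite := (hf.integrable.sub hqi).2
  have distance_eq_zero :
      ∫⁻ p, ‖f p - q p‖ₑ ∂weightedStateMeasure (contractionWeight L U) μ = 0 := by
    by_contra hne
    refine absurd half (not_le.2 ?_)
    conv_rhs => rw [← one_mul (lintegral _ _)]
    exact (ENNReal.mul_lt_mul_iff_left hne finite.ne).2 (by simp)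
  have hm : Measurable fun p => ‖f p - q p‖ₑ := (hf.measurable.sub hq).enorm
  rw [lintegral_eq_zero_iff hm] at distance_eq_zero
  filter_upwards [distance_eq_zero] with p hp
  simpa [sub_eq_zero] using hp

end IsSolution

end SFinite

end ForwardProblem

/-! ### Occupation probabilities -/

/-- The event that exactly `k` jumps occur strictly before `s`. -/
def sojourn (c : ℕ → Ω → ℝ → ℝ) (e : ℕ → Ω → ℝ) (k : ℕ) (s : ℝ) : Set Ω :=
  {ω | jumpTime c e k ω < s ∧ s ≤ jumpTime c e (k + 1) ω}

/-- For `p = (s, (ω, k))`, the probability that exactly `k` jumps occur strictly before `s` when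
the rates are frozen at their values at `ω`. -/
def occupationProb {_ : MeasurableSpace Ω} (μ : Measure Ω) (c : ℕ → Ω → ℝ → ℝ) (e : ℕ → Ω → ℝ)
    (p : ℝ × (Ω × ℕ)) : ℝ :=
  μ.real (sojourn (fun j _ => c j p.2.1) e p.2.2 p.1)

lemma occupationProb_nonneg {_ : MeasurableSpace Ω} {μ : Measure Ω} {c : ℕ → Ω → ℝ → ℝ}
    {e : ℕ → Ω → ℝ} (p : ℝ × (Ω × ℕ)) : 0 ≤ occupationProb μ c e p :=
  measureReal_nonneg

namespace IsClockModel

variable {m0 : MeasurableSpace Ω} {μ : Measure Ω} {lo up : ℝ} {H : ℕ → MeasurableSpace Ω}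
  {c : ℕ → Ω → ℝ → ℝ} {e : ℕ → Ω → ℝ} (S : IsClockModel μ lo up H c e)
include S

lemma measurable_rate' (k : ℕ) : Measurable fun p : Ω × ℝ => c k p.1 p.2 :=
  (S.measurable_rate k).mono (sup_le_sup (MeasurableSpace.comap_mono (S.le k)) le_rfl) le_rfl

lemma measurableSet_sojourn_uncurry (k : ℕ) :
    MeasurableSet {p : Ω × ℝ | p.1 ∈ sojourn c e k p.2} :=
  (measurableSet_lt ((S.measurable_jumpTime' k).comp measurable_fst) measurable_snd).inter
    (measurableSet_le measurable_snd ((S.measurable_jumpTime' (k + 1)).comp measurable_fst))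

lemma measurableSet_sojourn (k : ℕ) (s : ℝ) : MeasurableSet (sojourn c e k s) :=
  measurable_prodMk_right (y := s) (S.measurableSet_sojourn_uncurry k)

lemma pairwise_disjoint_sojourn (s : ℝ) :
    Pairwise (Function.onFun Disjoint fun k => sojourn c e k s) := by
  refine (pairwise_disjoint_on _).2 fun i j hij => disjoint_left.2 fun ω hi hj => ?_
  exact (hi.2.trans ((S.strictMono_jumpTime ω).monotone (Nat.succ_le_of_lt hij))).not_gt hj.1

lemma frozen (ω : Ω) : IsClockModel μ lo up H (fun k _ => c k ω) e where
  le := S.le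
  mono := S.mono
  rate k _ := S.rate k ω
  clock_pos := S.clock_pos
  measurable_rate k := (S.rate k ω).measurable.comp (@measurable_snd _ _ (H k) _)
  measurable_clock := S.measurable_clock
  indep := S.indep
  isExpOne := S.isExpOne

section Probability

variable [IsProbabilityMeasure μ]

lemma measure_jumpTime_succ_lt (k : ℕ) (t : ℝ) :
    μ {ω | jumpTime c e (k + 1) ω < t} =
      ∫⁻ s in Ioc 0 t, (∫⁻ ω in sojourn c e k s, ENNReal.ofReal (c k ω s) ∂μ) := by
  have hazard_eq : ∀ ω, ENNReal.ofReal (min (jumpHazard c e k t ω) (e k ω)) =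
      ∫⁻ s in Ioc 0 t, {p : Ω × ℝ | p.1 ∈ sojourn c e k p.2}.indicator
        (fun p => ENNReal.ofReal (c k p.1 p.2)) (ω, s) := fun ω => by
    rw [jumpHazard, min_cumHazard_eq_setIntegral (S.rate · ω) (S.clock_pos · ω),
      ofReal_integral_eq_lintegral_ofReal
        (((S.rate k ω).integrableOn_Ioc 0 t).integrable.indicator measurableSet_Ioc)
        (ae_of_all _ (indicator_nonneg fun s _ => ((S.rate k ω).pos s).le))]
    exact lintegral_congr fun s =>
      (indicator_comp_of_zero (g := ENNReal.ofReal) ENNReal.ofReal_zero ▸ rfl)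
  have hm : Measurable (Function.uncurry fun ω s => {p : Ω × ℝ | p.1 ∈ sojourn c e k p.2}.indicator
      (fun p => ENNReal.ofReal (c k p.1 p.2)) (ω, s)) :=
    (S.measurable_rate' k).ennreal_ofReal.indicator (S.measurableSet_sojourn_uncurry k)
  have := S.measure_inter_jumpTime_succ_lt k t MeasurableSet.univ
  rw [univ_inter, Measure.restrict_univ] at this
  simp_rw [this, hazard_eq]
  refine (lintegral_lintegral_swap hm.aemeasurable).trans (lintegral_congr fun s => ?_)
  rw [← lintegral_indicator (S.measurableSet_sojourn k s)]
  rfl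

lemma measurable_occupationProb : Measurable (occupationProb μ c e) := by
  have hm : ∀ k, Measurable fun p : (ℝ × Ω) × Ω =>
      arrivalTime (fun j => c j p.1.2) (fun j => e j p.2) k :=
    measurable_arrivalTime (c := fun k (p : (ℝ × Ω) × Ω) => c k p.1.2)
      (e := fun k (p : (ℝ × Ω) × Ω) => e k p.2) (fun k _ => S.rate k _) (fun k _ => S.clock_pos k _)
      (fun k => (S.measurable_rate' k).comp
        (by fun_prop : Measurable fun p : ((ℝ × Ω) × Ω) × ℝ => (p.1.1.2, p.2)))
      (fun k => (S.isExpOne k).1.comp measurable_snd)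
  have hset : ∀ k, MeasurableSet
      {p : (ℝ × Ω) × Ω | p.2 ∈ sojourn (fun j _ => c j p.1.2) e k p.1.1} := fun k =>
    (measurableSet_lt (hm k) (by fun_prop)).inter
      (measurableSet_le (by fun_prop) (hm (k + 1)))
  have hcount : Measurable fun p : (ℝ × Ω) × ℕ => occupationProb μ c e (p.1.1, (p.1.2, p.2)) :=
    measurable_from_prod_countable_left fun k =>
      (measurable_measure_prodMk_left (hset k)).ennreal_toReal
  exact hcount.comp (by fun_prop : Measurable fun p : ℝ × (Ω × ℕ) => ((p.1, p.2.1), p.2.2))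

lemma measureReal_jumpTime_succ_lt_frozen (ω : Ω) (k : ℕ) (t : ℝ) :
    μ.real {ω' | jumpTime (fun j _ => c j ω) e (k + 1) ω' < t} =
      ∫ s in Ioc 0 t, c k ω s * occupationProb μ c e (s, (ω, k)) := by
  have hm : Measurable fun s => occupationProb μ c e (s, (ω, k)) :=
    S.measurable_occupationProb.comp measurable_prodMk_right
  rw [Measure.real, (S.frozen ω).measure_jumpTime_succ_lt k t, integral_eq_lintegral_of_nonneg_ae
    (ae_of_all _ fun s => mul_nonneg ((S.rate k ω).pos s).le (occupationProb_nonneg _))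
    ((S.rate k ω).measurable.mul hm).aestronglyMeasurable]
  congr 1
  refine lintegral_congr fun s => ?_
  rw [setLIntegral_const, ENNReal.ofReal_mul ((S.rate k ω).pos s).le, occupationProb, Measure.real,
    ENNReal.ofReal_toReal (measure_ne_top _ _)]

lemma occupationProb_eq_sub (s : ℝ) (ω : Ω) (k : ℕ) :
    occupationProb μ c e (s, (ω, k)) =
      μ.real {ω' | jumpTime (fun j _ => c j ω) e k ω' < s} -
        μ.real {ω' | jumpTime (fun j _ => c j ω) e (k + 1) ω' < s} := by
  have S' := S.frozen ω
  have subset : {ω' | jumpTime (fun j _ => c j ω) e (k + 1) ω' < s} ⊆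
      {ω' | jumpTime (fun j _ => c j ω) e k ω' < s} :=
    fun ω' => (S'.strictMono_jumpTime ω' k.lt_succ_self).trans
  rw [← measureReal_sdiff subset (S'.measurable_jumpTime' (k + 1) measurableSet_Iio)]
  refine congrArg μ.real (Set.ext fun ω' => ?_)
  simp [sojourn]

lemma integrableOn_rate_mul_occupationProb (ω : Ω) (k : ℕ) (t : ℝ) :
    IntegrableOn (fun s => c k ω s * occupationProb μ c e (s, (ω, k))) (Ioc 0 t) := by
  have hm : Measurable fun s => occupationProb μ c e (s, (ω, k)) :=
    S.measurable_occupationProb.comp measurable_prodMk_right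
  refine Integrable.mul_bdd (c := 1) ((S.rate k ω).integrableOn_Ioc 0 t) hm.aestronglyMeasurable
    (ae_of_all _ fun s => ?_)
  rw [Real.norm_eq_abs, abs_of_nonneg (occupationProb_nonneg _)]
  exact measureReal_le_one

lemma occupationProb_eq_initialState_add_netFlow {p : ℝ × (Ω × ℕ)} (hp : 0 < p.1) :
    occupationProb μ c e p = initialState p +
      netFlow (fun p => c p.2.2 p.2.1 p.1 * occupationProb μ c e p) p := by
  obtain ⟨t, ω, k⟩ := p
  rw [S.occupationProb_eq_sub, S.measureReal_jumpTime_succ_lt_frozen]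
  rcases k with _ | k
  · have certain : μ.real {ω' : Ω | jumpTime (fun j _ => c j ω) e 0 ω' < t} = 1 := by
      simp [jumpTime, arrivalTime_zero, show 0 < t from hp]
    simp [certain, initialState, netFlow, countShift, integral_neg, sub_eq_add_neg]
  · rw [S.measureReal_jumpTime_succ_lt_frozen,
      ← integral_sub (S.integrableOn_rate_mul_occupationProb ω k t)
        (S.integrableOn_rate_mul_occupationProb ω (k + 1) t)]
    simp [initialState, netFlow, countShift]

lemma tsum_occupationProb_le_one (s : ℝ) (ω : Ω) :
    ∑' k, ENNReal.ofReal (occupationProb μ c e (s, (ω, k))) ≤ 1 := by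
  have S' := S.frozen ω
  simp_rw [occupationProb, Measure.real, ENNReal.ofReal_toReal (measure_ne_top _ _)]
  rw [← measure_iUnion (S'.pairwise_disjoint_sojourn s) fun k => S'.measurableSet_sojourn k s]
  exact prob_le_one

lemma integrable_occupationProb {C : ℝ} (hC : 0 < C) :
    Integrable (occupationProb μ c e) (weightedStateMeasure C μ) := by
  have hm := S.measurable_occupationProb
  have bound : ∀ s, ∫⁻ y, ‖occupationProb μ c e (s, y)‖ₑ ∂stateMeasure μ ≤ 1 := fun s => by
    have hs : Measurable fun y => ‖occupationProb μ c e (s, y)‖ₑ :=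
      hm.enorm.comp measurable_prodMk_left
    rw [lintegral_prod _ hs.aemeasurable]
    calc ∫⁻ ω, ∫⁻ k, ‖occupationProb μ c e (s, (ω, k))‖ₑ ∂Measure.count ∂μ
        ≤ ∫⁻ _, 1 ∂μ := lintegral_mono fun ω => by
          simp_rw [lintegral_count, Real.enorm_of_nonneg (occupationProb_nonneg _)]
          exact S.tsum_occupationProb_le_one s ω
      _ = 1 := by simp
  have := expWeighted.isFiniteMeasure hC
  refine ⟨hm.aestronglyMeasurable, ?_⟩
  rw [HasFiniteIntegral, lintegral_prod _ hm.enorm.aemeasurable]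
  exact (lintegral_mono bound).trans_lt (by simp)

end Probability

end IsClockModel

namespace expWeighted

lemma ae_iff {C : ℝ} {p : ℝ → Prop} :
    (∀ᵐ t ∂expWeighted C, p t) ↔ ∀ᵐ t ∂volume.restrict (Ioi 0), p t := by
  rw [expWeighted, ae_withDensity_iff (by fun_prop)]
  simp [Real.exp_pos]

end expWeighted

namespace IsClockModel

variable {𝒞 m0 : MeasurableSpace Ω} {μ : Measure Ω} [IsProbabilityMeasure μ] {lo up : ℝ}
  {H : ℕ → MeasurableSpace Ω} {c : ℕ → Ω → ℝ → ℝ} {e : ℕ → Ω → ℝ}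

lemma ae_occupationProb_eq (S : IsClockModel μ lo up H c e) (C : ℝ) :
    ∀ᵐ p ∂weightedStateMeasure C μ, occupationProb μ c e p = initialState p +
      netFlow (fun p => c p.2.2 p.2.1 p.1 * occupationProb μ c e p) p := by
  have time_pos : ∀ᵐ t ∂expWeighted C, 0 < t :=
    expWeighted.ae_iff.2 (ae_restrict_mem measurableSet_Ioi)
  filter_upwards [Measure.quasiMeasurePreserving_fst.ae time_pos] with p hp
  exact S.occupationProb_eq_initialState_add_netFlow hp

lemma setLIntegral_sojourn (S : IsClockModel μ lo up H c e) (h𝒞 : 𝒞 ≤ m0)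
    (hind : Indep 𝒞 (MeasurableSpace.comap (fun ω k => e k ω) inferInstance) μ)
    (hc : ∀ k, Measurable[𝒞.prod inferInstance] fun p : Ω × ℝ => c k p.1 p.2)
    {Z : Ω → ℝ≥0∞} (hZ : Measurable[𝒞] Z) (k : ℕ) (s : ℝ) :
    ∫⁻ ω in sojourn c e k s, Z ω ∂μ =
      ∫⁻ ω, Z ω * ENNReal.ofReal (occupationProb μ c e (s, (ω, k))) ∂μ := by
  let clocks : Ω → {y : ℕ → ℝ // ∀ k, 0 < y k} := fun ω => ⟨(e · ω), (S.clock_pos · ω)⟩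
  let T : Set (Ω × {y : ℕ → ℝ // ∀ k, 0 < y k}) :=
    {p | arrivalTime (c · p.1) p.2.1 k < s ∧ s ≤ arrivalTime (c · p.1) p.2.1 (k + 1)}
  have hclocks : Measurable clocks :=
    (measurable_pi_lambda _ fun k => (S.isExpOne k).1).subtype_mk
  have hind' : Indep 𝒞 (MeasurableSpace.comap clocks inferInstance) μ := by
    rwa [show MeasurableSpace.comap clocks inferInstance =
      MeasurableSpace.comap (fun ω k => e k ω) inferInstance from MeasurableSpace.comap_comp]
  have hf : Measurable[𝒞.prod inferInstance] (T.indicator fun p => Z p.1) := by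
    let _ : MeasurableSpace Ω := 𝒞
    have hm : ∀ k, Measurable fun p : Ω × {y : ℕ → ℝ // ∀ k, 0 < y k} =>
        arrivalTime (c · p.1) p.2.1 k :=
      measurable_arrivalTime (c := fun k (p : Ω × {y : ℕ → ℝ // ∀ k, 0 < y k}) => c k p.1)
        (e := fun k (p : Ω × {y : ℕ → ℝ // ∀ k, 0 < y k}) => p.2.1 k) (fun k p => S.rate k p.1)
        (fun k p => p.2.2 k) (fun k => (hc k).comp (by fun_prop :
          Measurable fun q : (Ω × {y : ℕ → ℝ // ∀ k, 0 < y k}) × ℝ => (q.1.1, q.2)))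
        (fun k => (measurable_pi_apply k).comp (measurable_subtype_coe.comp measurable_snd))
    exact (hZ.comp measurable_fst).indicator ((measurableSet_lt (hm k) measurable_const).inter
      (measurableSet_le measurable_const (hm (k + 1))))
  calc ∫⁻ ω in sojourn c e k s, Z ω ∂μ
      = ∫⁻ ω, T.indicator (fun p => Z p.1) (ω, clocks ω) ∂μ :=
        (lintegral_indicator (S.measurableSet_sojourn k s) Z).symm
    _ = ∫⁻ ω, ∫⁻ ω', T.indicator (fun p => Z p.1) (ω, clocks ω') ∂μ ∂μ :=
        lintegral_comp_of_indep h𝒞 hclocks hind' hf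
    _ = ∫⁻ ω, Z ω * ENNReal.ofReal (occupationProb μ c e (s, (ω, k))) ∂μ := by
        refine lintegral_congr fun ω => ?_
        rw [occupationProb, Measure.real, ENNReal.ofReal_toReal (measure_ne_top _ _),
          ← setLIntegral_const, ← lintegral_indicator ((S.frozen ω).measurableSet_sojourn k s)]
        rfl

lemma lintegral_eq_of_ae_mem_sojourn (S : IsClockModel μ lo up H c e) (h𝒞 : 𝒞 ≤ m0)
    (hind : Indep 𝒞 (MeasurableSpace.comap (fun ω k => e k ω) inferInstance) μ)
    (hc : ∀ k, Measurable[𝒞.prod inferInstance] fun p : Ω × ℝ => c k p.1 p.2) {s : ℝ}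
    {V : Ω × ℕ → ℝ≥0∞} (hV : ∀ k, Measurable[𝒞] fun ω => V (ω, k)) {Z : Ω → ℝ≥0∞}
    (hZ : ∀ᵐ ω ∂μ, ∃ k, ω ∈ sojourn c e k s ∧ Z ω = V (ω, k)) :
    ∫⁻ ω, Z ω ∂μ =
      ∫⁻ y, V y * ENNReal.ofReal (occupationProb μ c e (s, y)) ∂stateMeasure μ := by
  have hV' : ∀ k, Measurable fun ω => V (ω, k) := fun k => (hV k).mono h𝒞 le_rfl
  have hm : Measurable fun y => V y * ENNReal.ofReal (occupationProb μ c e (s, y)) :=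
    (measurable_from_prod_countable_left hV').mul
      (S.measurable_occupationProb.comp measurable_prodMk_left).ennreal_ofReal
  have eq_tsum : Z =ᵐ[μ] fun ω => ∑' k, (sojourn c e k s).indicator (fun ω => V (ω, k)) ω := by
    filter_upwards [hZ] with ω ⟨k, hk, hZk⟩
    rw [tsum_eq_single k fun j hj => indicator_of_notMem
      (fun hj' => disjoint_left.1 (S.pairwise_disjoint_sojourn s hj) hj' hk) _,
      indicator_of_mem hk, hZk]
  rw [lintegral_congr_ae eq_tsum, lintegral_tsum fun k =>
    ((hV' k).indicator (S.measurableSet_sojourn k s)).aemeasurable,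
    lintegral_prod_symm _ hm.aemeasurable, lintegral_count]
  exact tsum_congr fun k => (lintegral_indicator (S.measurableSet_sojourn k s) _).trans
    (S.setLIntegral_sojourn h𝒞 hind hc (hV k) k s)

lemma setIntegral_eq_of_ae_mem_sojourn (S : IsClockModel μ lo up H c e) (h𝒞 : 𝒞 ≤ m0)
    (hind : Indep 𝒞 (MeasurableSpace.comap (fun ω k => e k ω) inferInstance) μ)
    (hc : ∀ k, Measurable[𝒞.prod inferInstance] fun p : Ω × ℝ => c k p.1 p.2)
    {site : ℕ → Ω → ℝ} (hsite : ∀ k, Measurable[𝒞] (site k))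
    {s : ℝ} {X : Ω → ℝ} (hXm : Measurable X)
    (hX : ∀ᵐ ω ∂μ, ∃ k, ω ∈ sojourn c e k s ∧ X ω = site k ω)
    {Z : Ω → ℝ} (hZ : Measurable[𝒞] Z) (hZ0 : ∀ ω, 0 ≤ Z ω) (x : ℝ) :
    ∫ ω in {ω | X ω = x}, Z ω ∂μ =
      ∫ y in {y : Ω × ℕ | site y.2 y.1 = x}, Z y.1 * occupationProb μ c e (s, y)
        ∂stateMeasure μ := by
  have hZ' : Measurable Z := hZ.mono h𝒞 le_rfl
  have hfibre : MeasurableSet {y : Ω × ℕ | site y.2 y.1 = x} :=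
    (measurable_from_prod_countable_left fun k => (hsite k).mono h𝒞 le_rfl :
      Measurable fun y : Ω × ℕ => site y.2 y.1) (measurableSet_singleton x)
  have hlevel : MeasurableSet {ω | X ω = x} := hXm (measurableSet_singleton x)
  have hm : Measurable fun y : Ω × ℕ => Z y.1 * occupationProb μ c e (s, y) :=
    (hZ'.comp measurable_fst).mul (S.measurable_occupationProb.comp measurable_prodMk_left)
  have h0 : ∀ y : Ω × ℕ, 0 ≤ Z y.1 * occupationProb μ c e (s, y) := fun y =>
    mul_nonneg (hZ0 y.1) (occupationProb_nonneg _)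
  rw [integral_eq_lintegral_of_nonneg_ae (ae_of_all _ hZ0) hZ'.aestronglyMeasurable,
    integral_eq_lintegral_of_nonneg_ae (ae_of_all _ h0) hm.aestronglyMeasurable,
    ← lintegral_indicator hlevel, ← lintegral_indicator hfibre]
  congr 1
  rw [S.lintegral_eq_of_ae_mem_sojourn h𝒞 hind hc (s := s)
    (V := {y : Ω × ℕ | site y.2 y.1 = x}.indicator fun y => ENNReal.ofReal (Z y.1))]
  · refine lintegral_congr fun y => ?_
    by_cases hy : site y.2 y.1 = x <;> simp [hy, ENNReal.ofReal_mul (hZ0 y.1)]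
  · intro k
    exact hZ.ennreal_ofReal.indicator (hsite k (measurableSet_singleton x))
  · filter_upwards [hX] with ω ⟨k, hk, hXk⟩
    exact ⟨k, hk, by simp [indicator, hXk]⟩

end IsClockModel

theorem ForwardProblem.IsSolution.ae_ratio_mul_measureReal_eq {𝒞 m0 : MeasurableSpace Ω}
    {μ : Measure Ω} [IsProbabilityMeasure μ] {L U lo up : ℝ} {P : ForwardProblem μ L U}
    {f : ℝ × (Ω × ℕ) → ℝ} (hf : P.IsSolution f) {H : ℕ → MeasurableSpace Ω} {e : ℕ → Ω → ℝ}
    (S : IsClockModel μ lo up H (fun k ω s => P.intensity (P.ratio f) (s, (ω, k))) e)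
    (h𝒞 : 𝒞 ≤ m0) (hind : Indep 𝒞 (MeasurableSpace.comap (fun ω k => e k ω) inferInstance) μ)
    (hc : ∀ k, Measurable[𝒞.prod inferInstance]
      fun p : Ω × ℝ => P.intensity (P.ratio f) (p.2, (p.1, k)))
    (hsite : ∀ k, Measurable[𝒞] (P.site k)) (hweight : ∀ s, Measurable[𝒞] (P.weight s))
    {X : ℝ → Ω → ℝ} (hXm : ∀ s, Measurable (X s))
    (hX : ∀ s, 0 < s → ∀ᵐ ω ∂μ, ∃ k,
      ω ∈ sojourn (fun k ω s => P.intensity (P.ratio f) (s, (ω, k))) e k s ∧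
        X s ω = P.site k ω) :
    ∀ᵐ s ∂volume.restrict (Ioi 0), ∀ x,
      P.ratio f s x * μ.real {ω | X s ω = x} = ∫ ω in {ω | X s ω = x}, P.weight s ω ∂μ := by
  set occ := occupationProb μ (fun k ω s => P.intensity (P.ratio f) (s, (ω, k))) e
  have f_eq_occ : f =ᵐ[weightedStateMeasure (contractionWeight L U) μ] occ :=
    hf.ae_eq_of_linear S.measurable_occupationProb
      (S.integrable_occupationProb P.contractionWeight_pos) occupationProb_nonneg
      (S.ae_occupationProb_eq _)
  filter_upwards [expWeighted.ae_iff.1 (Measure.ae_ae_of_ae_prod f_eq_occ),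
    expWeighted.ae_iff.1 hf.integrable.prod_right_ae, ae_restrict_mem measurableSet_Ioi]
    with s hs hfs hs0 x
  have max_eq : (fun y => max (f (s, y)) 0) =ᵐ[stateMeasure μ] fun y => occ (s, y) := by
    filter_upwards [hs] with y hy
    rw [hy, max_eq_left (occupationProb_nonneg _)]
  have mass_eq : P.siteIntegral (fun p => max (f p) 0) s x = μ.real {ω | X s ω = x} := by
    have := S.setIntegral_eq_of_ae_mem_sojourn h𝒞 hind hc hsite (hXm s) (hX s hs0)
      (@measurable_const _ _ _ 𝒞 1) (fun _ => zero_le_one) x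
    simp only [setIntegral_const, smul_eq_mul, mul_one, one_mul] at this
    rw [this]
    exact integral_congr_ae (ae_restrict_of_ae max_eq)
  have weighted_eq : P.siteIntegral (fun p => P.weight p.1 p.2.1 * max (f p) 0) s x =
      ∫ ω in {ω | X s ω = x}, P.weight s ω ∂μ := by
    rw [S.setIntegral_eq_of_ae_mem_sojourn h𝒞 hind hc hsite (hXm s) (hX s hs0) (hweight s)
      (P.weight_nonneg s) x]
    exact integral_congr_ae (ae_restrict_of_ae (max_eq.mono fun y hy =>
      congrArg (P.weight s y.1 * ·) hy))
  rw [← mass_eq, ← weighted_eq]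
  exact P.ratio_mul_siteIntegral hfs x

/-! ### Pure jump paths -/

section JumpPath

variable {τ J : ℕ → Ω → ℝ} {ω : Ω} {s : ℝ} {k : ℕ}

lemma exists_lt_and_le_succ {t : ℕ → ℝ} (h0 : t 0 < s) (h : Tendsto t atTop atTop) :
    ∃ k, t k < s ∧ s ≤ t (k + 1) := by
  simpa only [not_le] using Nat.exists_not_and_succ_of_not_zero_of_exists (p := (s ≤ t ·)) h0.not_ge
    (h.eventually_ge_atTop s).exists

lemma exists_le_and_lt_succ {t : ℕ → ℝ} (h0 : t 0 ≤ s) (h : Tendsto t atTop atTop) :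
    ∃ k, t k ≤ s ∧ s < t (k + 1) := by
  simpa only [not_lt] using Nat.exists_not_and_succ_of_not_zero_of_exists (p := (s < t ·)) h0.not_gt
    (h.eventually_gt_atTop s).exists

lemma jumpXminus_eq_sum_range (hτ : Monotone fun k => τ k ω) (hlt : τ k ω < s)
    (hle : s ≤ τ (k + 1) ω) : jumpXminus τ J s ω = ∑ j ∈ Finset.range k, J j ω := by
  rw [jumpXminus, tsum_eq_sum (s := Finset.range k) fun j hj =>
    if_neg (not_lt.2 (hle.trans (hτ (by simp at hj; lia))))]
  exact Finset.sum_congr rfl fun j hj => if_pos ((hτ (Finset.mem_range.1 hj)).trans_lt hlt)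

lemma jumpX_eq_sum_range_ite (hτ : Monotone fun k => τ k ω) (hlt : s < τ (k + 1) ω) :
    jumpX τ J s ω = ∑ j ∈ Finset.range k, if τ (j + 1) ω ≤ s then J j ω else 0 :=
  tsum_eq_sum fun j hj => if_neg (not_le.2 (hlt.trans_le (hτ (by simp at hj; lia))))

lemma jumpX_eq_sum_range (hτ : Monotone fun k => τ k ω) (hle : τ k ω ≤ s)
    (hlt : s < τ (k + 1) ω) : jumpX τ J s ω = ∑ j ∈ Finset.range k, J j ω := by
  rw [jumpX_eq_sum_range_ite hτ hlt]
  exact Finset.sum_congr rfl fun j hj => if_pos ((hτ (Finset.mem_range.1 hj)).trans hle)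

lemma measurable_jumpXminus {_ : MeasurableSpace Ω} (hτ : ∀ k, Measurable (τ k))
    (hJ : ∀ k, Measurable (J k)) (s : ℝ) : Measurable (jumpXminus τ J s) :=
  Measurable.tsum fun k =>
    Measurable.ite (measurableSet_lt (hτ (k + 1)) measurable_const) (hJ k) measurable_const

end JumpPath

section FiniteSums

variable {A : Set ℝ} {ν : Measure ℝ}

lemma sum_range_mem_FS {a : ℕ → ℝ} (ha : ∀ k, a k ∈ A) (k : ℕ) :
    ∑ j ∈ Finset.range k, a j ∈ FS A :=
  ⟨k, fun i => a i, fun i => ha i, Finset.sum_range _⟩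

lemma countable_FS (hA : A.Countable) : (FS A).Countable := by
  have := hA.to_subtype
  refine (countable_iUnion fun k : ℕ =>
    countable_range fun a : Fin k → A => ∑ i, (a i : ℝ)).mono ?_
  rintro x ⟨k, a, ha, rfl⟩
  exact mem_iUnion.2 ⟨k, fun i => ⟨a i, ha i⟩, rfl⟩

lemma IsDiscrete.countable_atomSet (h : IsDiscrete ν) : (atomSet ν).Countable := by
  obtain ⟨S, hS, hν⟩ := h
  refine hS.mono fun x hx => not_not.1 fun hxS => hx ?_
  exact measure_mono_null (singleton_subset_iff.2 hxS) hν

lemma IsDiscrete.ae_mem_atomSet (h : IsDiscrete ν) : ∀ᵐ x ∂ν, x ∈ atomSet ν := by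
  obtain ⟨S, hS, hν⟩ := h
  have not_atom : ∀ᵐ x ∂ν, ∀ y ∈ S \ atomSet ν, x ≠ y :=
    (ae_ball_iff (hS.mono sdiff_subset)).2 fun y hy => by simpa [ae_iff] using not_not.1 hy.2
  filter_upwards [compl_mem_ae_iff.2 hν, not_atom] with x hxS hx
  exact not_not.1 fun hx' => hx x ⟨not_not.1 hxS, hx'⟩ rfl

end FiniteSums

/-! ### Joint measurability and conditioning on a discrete variable -/

lemma ProgMeas.measurable_max_zero {F : ℝ → MeasurableSpace Ω} {u : ℝ → Ω → ℝ}
    (h : ProgMeas F u) :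
    Measurable[MeasurableSpace.prod inferInstance (Finfty F)]
      fun p : ℝ × Ω => u (max p.1 0) p.2 := by
  let _ : MeasurableSpace Ω := Finfty F
  have measurable_stopped (n : ℕ) :
      Measurable fun p : ℝ × Ω => u (projIcc (0 : ℝ) n n.cast_nonneg p.1) p.2 := by
    have hle : F n ≤ Finfty F := le_iSup₂_of_le (n : ℝ) (mem_Ici.2 n.cast_nonneg) le_rfl
    have hu : Measurable fun p : Icc (0 : ℝ) n × Ω => u p.1 p.2 :=
      (h n n.cast_nonneg).mono (sup_le_sup le_rfl (MeasurableSpace.comap_mono hle)) le_rfl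
    have hproj : Measurable (projIcc (0 : ℝ) n n.cast_nonneg) := continuous_projIcc.measurable
    exact hu.comp ((hproj.comp measurable_fst).prodMk measurable_snd)
  refine measurable_of_tendsto_metrizable measurable_stopped (tendsto_pi_nhds.2 fun p => ?_)
  refine tendsto_const_nhds.congr' ?_
  filter_upwards [tendsto_natCast_atTop_atTop.eventually_ge_atTop p.1] with n hn
  simp [projIcc, max_comm, min_eq_right hn]

lemma measurable_ite_mem_of_countable {α β : Type*} [MeasurableSpace α] [MeasurableSpace β]
    [MeasurableSingletonClass β] {A : Set β} [DecidablePred (· ∈ A)] (hA : A.Countable)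
    {f : α → β → ℝ} (hf : ∀ x ∈ A, Measurable fun t => f t x) (d : ℝ) :
    Measurable fun p : α × β => if p.2 ∈ A then f p.1 p.2 else d := by
  have := hA.to_subtype
  refine measurable_of_restrict_of_restrict_compl (measurable_snd hA.measurableSet) ?_ ?_
  · have hfA : Measurable fun p : α × A => f p.1 p.2 :=
      measurable_from_prod_countable_left fun x => hf x x.2
    have hpair : Measurable fun p : (Prod.snd ⁻¹' A : Set (α × β)) =>
        (p.1.1, (⟨p.1.2, p.2⟩ : A)) :=
      (measurable_fst.comp measurable_subtype_coe).prodMk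
        (measurable_snd.comp measurable_subtype_coe).subtype_mk
    convert hfA.comp hpair using 1
    exact funext fun p => if_pos p.2
  · convert! measurable_const (a := d) with p
    exact if_neg p.2

lemma condExp_comap_apply_of_mul_measureReal_eq {m0 : MeasurableSpace Ω} {μ : Measure Ω}
    [IsFiniteMeasure μ] {X Y : Ω → ℝ} (hX : Measurable X) (hY : Integrable Y μ) {a : ℝ} {ω : Ω}
    (hne : μ {ω' | X ω' = X ω} ≠ 0)
    (ha : a * μ.real {ω' | X ω' = X ω} = ∫ ω' in {ω' | X ω' = X ω}, Y ω' ∂μ) :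
    (μ[Y | MeasurableSpace.comap X inferInstance]) ω = a := by
  obtain ⟨φ, -, hφ⟩ := (stronglyMeasurable_condExp (μ := μ) (f := Y)
    (m := MeasurableSpace.comap X inferInstance)).measurable.exists_eq_measurable_comp
  have hset : MeasurableSet[MeasurableSpace.comap X inferInstance] {ω' | X ω' = X ω} :=
    ⟨{X ω}, measurableSet_singleton _, rfl⟩
  have integral_eq :
      ∫ _ in {ω' | X ω' = X ω}, φ (X ω) ∂μ = ∫ ω' in {ω' | X ω' = X ω}, Y ω' ∂μ := by
    rw [← setIntegral_condExp hX.comap_le hY hset]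
    refine setIntegral_congr_fun (hX.comap_le _ hset) fun ω' hω' => ?_
    rw [hφ, Function.comp, show X ω' = X ω from hω']
  rw [setIntegral_const, ← ha, smul_eq_mul, mul_comm] at integral_eq
  rw [hφ]
  exact mul_right_cancel₀ ((measureReal_ne_zero_iff (measure_ne_top _ _)).2 hne) integral_eq

/-! ### The compensated sum along a path -/

section Path

variable {lo up : ℝ} {c : ℕ → ℝ → ℝ} {e : ℕ → ℝ} (hc : ∀ k, BoundedRate lo up (c k))
  (he : ∀ k, 0 < e k)
include hc he

lemma setIntegral_eq_sum_min_cumHazard (hT : Tendsto (arrivalTime c e) atTop atTop) {t : ℝ} {n : ℕ}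
    (hn : t < arrivalTime c e n) {ψ : ℝ → ℝ} (hψ : ∀ᵐ s ∂volume.restrict (Ioc 0 t), ∀ k,
      arrivalTime c e k < s → s ≤ arrivalTime c e (k + 1) → ψ s = c k s) :
    ∫ s in Ioc 0 t, ψ s = ∑ k ∈ Finset.range n, min (cumHazard c e k t) (e k) := by
  have hmono := (strictMono_arrivalTime hc he).monotone
  have hdisj : Pairwise (Function.onFun Disjoint
      fun k => Ioc (arrivalTime c e k) (arrivalTime c e (k + 1))) :=
    hmono.pairwise_disjoint_on_Ioc_succ
  simp_rw [min_cumHazard_eq_setIntegral hc he]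
  rw [← integral_finsetSum _ fun k _ =>
    ((hc k).integrableOn_Ioc 0 t).indicator measurableSet_Ioc]
  refine integral_congr_ae ?_
  filter_upwards [hψ, ae_restrict_mem measurableSet_Ioc] with s hs hst
  obtain ⟨k, hlt, hle⟩ := exists_lt_and_le_succ (t := arrivalTime c e) hst.1 hT
  have hkn : k < n := hmono.reflect_lt (hlt.trans_le (hst.2.trans hn.le))
  rw [hs k hlt hle, Finset.sum_eq_single_of_mem k (Finset.mem_range.2 hkn) fun j _ hj =>
    indicator_of_notMem (fun hjs => disjoint_left.1 (hdisj hj) hjs ⟨hlt, hle⟩) _,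
    indicator_of_mem (show s ∈ Ioc (arrivalTime c e k) (arrivalTime c e (k + 1)) from ⟨hlt, hle⟩)]

lemma arrivalTime_le_mul_of_clock_le {δ : ℝ} {n : ℕ} (h : ∀ k < n, e k ≤ δ) :
    arrivalTime c e n ≤ n * (δ / lo) := by
  induction n with
  | zero => simp
  | succ n ih =>
    have hprev := ih fun k hk => h k (by lia)
    have hstep := arrivalTime_succ_le_add_div hc he n
    have hclock := div_le_div_of_nonneg_right (h n n.lt_succ_self) (hc 0).lo_pos.le
    push_cast
    linarith

lemma mem_Ioc_arrivalTime_of_clock {s : ℝ} (hs : 0 < s) {n : ℕ}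
    (hlt : ∀ k < n, e k < lo * s / (n + 1)) (hgt : up * s < e n) :
    s ∈ Ioc (arrivalTime c e n) (arrivalTime c e (n + 1)) := by
  have hlo := (hc 0).lo_pos
  constructor
  · calc arrivalTime c e n ≤ n * (lo * s / (n + 1) / lo) :=
          arrivalTime_le_mul_of_clock_le hc he fun k hk => (hlt k hk).le
      _ = n / (n + 1) * s := by field_simp
      _ < 1 * s := by gcongr; exact (div_lt_one (by positivity)).2 (by linarith)
      _ = s := one_mul s
  · exact not_lt.1 fun h => (((arrivalTime_succ_lt_iff hc he n s).1 h).trans_le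
      (cumHazard_le_mul hc he hs.le)).not_gt hgt

end Path

lemma IsClockModel.jump_sub_setIntegral_eq_tsum_compensatedJump {m0 : MeasurableSpace Ω}
    {μ : Measure Ω} {lo up : ℝ} {H : ℕ → MeasurableSpace Ω} {c : ℕ → Ω → ℝ → ℝ} {e : ℕ → Ω → ℝ}
    (S : IsClockModel μ lo up H c e) {ω : Ω}
    (hT : Tendsto (fun k => jumpTime c e k ω) atTop atTop) {t : ℝ} {ψ : ℝ → ℝ}
    (hψ : ∀ᵐ s ∂volume.restrict (Ioc 0 t), ∀ k,
      jumpTime c e k ω < s → s ≤ jumpTime c e (k + 1) ω → ψ s = c k ω s)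
    (J : ℕ → Ω → ℝ) (h : ℝ → ℝ) (m : ℝ) :
    (∑' k : ℕ, if jumpTime c e (k + 1) ω ≤ t then h (J k ω) else 0) - m * ∫ s in Ioc 0 t, ψ s =
      ∑' k, compensatedJump c e J h m k t ω := by
  obtain ⟨n, hn⟩ := (hT.eventually_gt_atTop t).exists
  have lt_of_notMem : ∀ k ∉ Finset.range n, t < jumpTime c e k ω := fun k hk =>
    hn.trans_le ((S.strictMono_jumpTime ω).monotone (not_lt.1 (Finset.mem_range.not.1 hk)))
  have jump_eq_zero : ∀ k ∉ Finset.range n,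
      (if jumpTime c e (k + 1) ω ≤ t then h (J k ω) else 0) = 0 := fun k hk =>
    if_neg (not_le.2 ((lt_of_notMem k hk).trans (S.strictMono_jumpTime ω k.lt_succ_self)))
  have compensated_eq_zero : ∀ k ∉ Finset.range n, compensatedJump c e J h m k t ω = 0 := by
    intro k hk
    have hazard_eq_zero : jumpHazard c e k t ω = 0 := cumHazard_of_le (lt_of_notMem k hk).le
    simp [compensatedJump, jump_eq_zero k hk, hazard_eq_zero, (S.clock_pos k ω).le]
  rw [tsum_eq_sum jump_eq_zero, tsum_eq_sum compensated_eq_zero,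
    setIntegral_eq_sum_min_cumHazard (S.rate · ω) (S.clock_pos · ω) hT hn hψ, Finset.mul_sum,
    ← Finset.sum_sub_distrib]
  rfl

/-! ### The driving noise -/

/-- The σ-algebras generated by the single clocks `E k`, by the single marks `J k`, and by the
whole filtration `F`, whose independence is the standing assumption. -/
@[reducible] def noise (F : ℝ → MeasurableSpace Ω) (E J : ℕ → Ω → ℝ) :
    ℕ ⊕ ℕ ⊕ Unit → MeasurableSpace Ω :=
  Sum.elim (fun k => MeasurableSpace.comap (E k) inferInstance)
    (Sum.elim (fun k => MeasurableSpace.comap (J k) inferInstance) fun _ => Finfty F)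

/-- The indices of the noise that is revealed by the first `k` jumps. -/
def revealed (k : ℕ) : Set (ℕ ⊕ ℕ ⊕ Unit) :=
  {i | Sum.elim (· < k) (Sum.elim (· < k) fun _ => True) i}

/-- The information carried by `F` and by the first `k` clocks and marks. -/
@[reducible] def jumpInfo (F : ℝ → MeasurableSpace Ω) (E J : ℕ → Ω → ℝ) (k : ℕ) :
    MeasurableSpace Ω := ⨆ i ∈ revealed k, noise F E J i

/-- The information carried by `F` and by all the marks. -/
@[reducible] def environment (F : ℝ → MeasurableSpace Ω) (E J : ℕ → Ω → ℝ) :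
    MeasurableSpace Ω := ⨆ i ∈ range Sum.inr, noise F E J i

section Noise

variable {F : ℝ → MeasurableSpace Ω} {E J : ℕ → Ω → ℝ} {j k : ℕ}

lemma le_Finfty {t : ℝ} (ht : 0 ≤ t) : F t ≤ Finfty F := le_iSup₂_of_le t ht le_rfl

lemma noise_le_iSup {I : Set (ℕ ⊕ ℕ ⊕ Unit)} (i : ℕ ⊕ ℕ ⊕ Unit) (hi : i ∈ I) :
    noise F E J i ≤ ⨆ i ∈ I, noise F E J i := le_biSup (noise F E J) hi

lemma Finfty_le_jumpInfo : Finfty F ≤ jumpInfo F E J k :=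
  noise_le_iSup (.inr (.inr ())) trivial

lemma Finfty_le_environment : Finfty F ≤ environment F E J :=
  noise_le_iSup (.inr (.inr ())) (mem_range_self _)

lemma monotone_jumpInfo : Monotone (jumpInfo F E J) := by
  refine fun k l hkl => biSup_mono fun i hi => ?_
  rcases i with j | j | _
  · exact lt_of_lt_of_le (show j < k from hi) hkl
  · exact lt_of_lt_of_le (show j < k from hi) hkl
  · trivial

lemma measurable_clock_jumpInfo (h : j < k) : Measurable[jumpInfo F E J k] (E j) :=
  (comap_measurable (E j)).mono (noise_le_iSup (F := F) (E := E) (J := J) (.inl j) h) le_rfl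

lemma measurable_mark_jumpInfo (h : j < k) : Measurable[jumpInfo F E J k] (J j) :=
  (comap_measurable (J j)).mono (noise_le_iSup (F := F) (E := E) (J := J) (.inr (.inl j)) h) le_rfl

lemma measurable_mark_environment (j : ℕ) : Measurable[environment F E J] (J j) :=
  (comap_measurable (J j)).mono
    (noise_le_iSup (F := F) (E := E) (J := J) (.inr (.inl j)) (mem_range_self _)) le_rfl

variable {m0 : MeasurableSpace Ω} {μ : Measure Ω}

lemma noise_le (hF : ∀ t, F t ≤ m0) (hE : ∀ k, Measurable (E k)) (hJ : ∀ k, Measurable (J k))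
    (i : ℕ ⊕ ℕ ⊕ Unit) : noise F E J i ≤ m0 := by
  rcases i with j | j | _
  · exact (hE j).comap_le
  · exact (hJ j).comap_le
  · exact iSup₂_le fun t _ => hF t

variable (hle : ∀ i, noise F E J i ≤ m0) (hind : iIndep (noise F E J) μ)
include hle hind

lemma indep_jumpInfo_clock (k : ℕ) :
    Indep (jumpInfo F E J k) (MeasurableSpace.comap (E k) inferInstance) μ :=
  indep_of_indep_of_le_right
    (indep_iSup_of_disjoint hle hind (T := {.inl k}) (by simp [revealed]))
    (noise_le_iSup (F := F) (E := E) (J := J) (.inl k) rfl)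

lemma indep_mark_jumpInfo_sup_clock (k : ℕ) :
    Indep (MeasurableSpace.comap (J k) inferInstance)
      (jumpInfo F E J k ⊔ MeasurableSpace.comap (E k) inferInstance) μ :=
  indep_of_indep_of_le_right
    (indep_of_indep_of_le_left
      (indep_iSup_of_disjoint hle hind (S := {.inr (.inl k)}) (T := insert (.inl k) (revealed k))
        (by simp [revealed]))
      (noise_le_iSup (F := F) (E := E) (J := J) (.inr (.inl k)) rfl))
    (sup_le (biSup_mono fun _ => mem_insert_of_mem _)
      (noise_le_iSup (F := F) (E := E) (J := J) (.inl k) (mem_insert _ _)))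

lemma indep_environment_clocks :
    Indep (environment F E J) (MeasurableSpace.comap (fun ω k => E k ω) inferInstance) μ := by
  refine indep_of_indep_of_le_right (indep_iSup_of_disjoint hle hind (T := range Sum.inl)
    isCompl_range_inl_range_inr.disjoint.symm) (Measurable.comap_le ?_)
  let _ : MeasurableSpace Ω := ⨆ i ∈ range Sum.inl, noise F E J i
  exact measurable_pi_lambda _ fun k => (comap_measurable (E k)).mono
    (noise_le_iSup (F := F) (E := E) (J := J) (.inl k) (mem_range_self _)) le_rfl

omit hle in
lemma measure_clocks_marks_ne_zero [IsProbabilityMeasure μ] (hE : ∀ k, IsExpOne μ (E k)) {n : ℕ}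
    {a : Fin n → ℝ} (ha : ∀ i : Fin n, μ {ω | J i ω = a i} ≠ 0) {δ b : ℝ} (hδ : 0 < δ)
    (hb : 0 ≤ b) :
    μ {ω | (∀ k < n, E k ω < δ) ∧ b < E n ω ∧ ∀ i : Fin n, J i ω = a i} ≠ 0 := by
  let I : Finset (ℕ ⊕ ℕ ⊕ Unit) := (Finset.range (n + 1)).disjSum ((Finset.range n).disjSum ∅)
  let event : ℕ ⊕ ℕ ⊕ Unit → Set Ω := Sum.elim
    (fun k => E k ⁻¹' if k < n then Iio δ else Ioi b)
    (Sum.elim (fun k => J k ⁻¹' if h : k < n then {a ⟨k, h⟩} else univ) fun _ => univ)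
  have event_meas : ∀ i ∈ I, MeasurableSet[noise F E J i] (event i) := by
    rintro (k | k | _) -
    · exact ⟨_, by split_ifs <;> measurability, rfl⟩
    · exact ⟨_, by split_ifs <;> measurability, rfl⟩
    · exact MeasurableSet.univ
  have event_ne_zero : ∀ i ∈ I, μ (event i) ≠ 0 := by
    rintro (k | k | u) -
    · by_cases hk : k < n
      · have : μ {ω | E k ω < δ} ≠ 0 := by simp [(hE k).measure_lt hδ.le, hδ]
        simpa [event, hk, preimage, Iio] using this
      · have : μ {ω | b < E k ω} ≠ 0 := by simp [(hE k).2 b hb, Real.exp_pos]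
        simpa [event, hk, preimage, Ioi] using this
    · by_cases hk : k < n
      · simpa [event, hk, preimage] using ha ⟨k, hk⟩
      · simp [event, hk]
    · simp [event]
  have inter_ne_zero : μ (⋂ i ∈ I, event i) ≠ 0 := by
    rw [hind.meas_biInter event_meas]
    exact Finset.prod_ne_zero_iff.2 event_ne_zero
  refine fun h0 => inter_ne_zero (measure_mono_null (fun ω hω => ?_) h0)
  have hω : ∀ i ∈ I, ω ∈ event i := by simpa only [mem_iInter] using hω
  refine ⟨fun k hk => ?_, ?_, fun i => ?_⟩
  · simpa [event, hk] using hω (.inl k) (by simp [I]; lia)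
  · simpa [event] using hω (.inl n) (by simp [I])
  · simpa [event] using hω (.inr (.inl i)) (by simp [I])

end Noise

lemma IsClockModel.measure_jumpXminus_eq_ne_zero {m0 : MeasurableSpace Ω} {μ : Measure Ω}
    [IsProbabilityMeasure μ] {lo up : ℝ} {H : ℕ → MeasurableSpace Ω} {c : ℕ → Ω → ℝ → ℝ}
    {F : ℝ → MeasurableSpace Ω} {E J : ℕ → Ω → ℝ} (S : IsClockModel μ lo up H c E)
    (hind : iIndep (noise F E J) μ) {ν : Measure ℝ} (hJ : ∀ k, Measurable (J k))
    (hν : ∀ k, μ.map (J k) = ν) {s : ℝ} (hs : 0 < s) {x : ℝ} (hx : x ∈ FS (atomSet ν)) :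
    μ {ω | jumpXminus (jumpTime c E) J s ω = x} ≠ 0 := by
  obtain ⟨n, a, ha, rfl⟩ := hx
  obtain ⟨ω₀⟩ := nonempty_of_isProbabilityMeasure μ
  have hlo := (S.rate 0 ω₀).lo_pos
  have hup := (S.rate 0 ω₀).up_pos
  have mark_ne_zero (i : Fin n) : μ {ω | J i ω = a i} ≠ 0 := by
    have hatom := ha i
    rwa [atomSet, mem_ofPred_eq, ← hν i,
      Measure.map_apply (hJ i) (measurableSet_singleton _)] at hatom
  refine fun h0 => measure_clocks_marks_ne_zero hind S.isExpOne mark_ne_zero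
    (show 0 < lo * s / (n + 1) by positivity) (show 0 ≤ up * s by positivity)
    (measure_mono_null ?_ h0)
  rintro ω ⟨hlt, hgt, hmark⟩
  obtain ⟨htime, htime'⟩ := mem_Ioc_arrivalTime_of_clock (S.rate · ω) (S.clock_pos · ω) hs hlt hgt
  change jumpXminus _ J s ω = _
  rw [jumpXminus_eq_sum_range (S.strictMono_jumpTime ω).monotone htime htime', Finset.sum_range]
  exact Finset.sum_congr rfl fun i _ => hmark i

/-! ### From the driving data to the jump process -/

lemma ForwardProblem.measurable_intensity_comp {𝒜 m0 : MeasurableSpace Ω} {μ : Measure Ω} {L U : ℝ}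
    (P : ForwardProblem μ L U) {k : ℕ} (hsite : Measurable[𝒜] (P.site k))
    (hweight : Measurable[MeasurableSpace.prod inferInstance 𝒜] fun p : ℝ × Ω => P.weight p.1 p.2)
    {g : ℝ → ℝ → ℝ} (hg : Measurable fun p : ℝ × ℝ => g p.1 p.2) :
    Measurable[𝒜.prod inferInstance] fun p : Ω × ℝ => P.intensity g (p.2, (p.1, k)) := by
  have hpoint : Measurable[𝒜.prod inferInstance] fun p : Ω × ℝ => (p.2, P.site k p.1) :=
    measurable_snd.prodMk (hsite.comp measurable_fst)
  exact ((hweight.comp measurable_swap).mul (P.measurable_lam.comp hpoint)).div (hg.comp hpoint)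

/-- A positive version of an almost surely positive random variable. -/
def positiveVersion (X : Ω → ℝ) (ω : Ω) : ℝ := if 0 < X ω then X ω else 1

lemma positiveVersion_pos (X : Ω → ℝ) (ω : Ω) : 0 < positiveVersion X ω := by
  unfold positiveVersion
  split_ifs with h
  exacts [h, one_pos]

lemma measurable_positiveVersion {_ : MeasurableSpace Ω} {X : Ω → ℝ} (hX : Measurable X) :
    Measurable (positiveVersion X) :=
  Measurable.ite (measurableSet_lt measurable_const hX) hX measurable_const

lemma IsExpOne.positiveVersion {m0 : MeasurableSpace Ω} {μ : Measure Ω} [IsProbabilityMeasure μ]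
    {X : Ω → ℝ} (h : IsExpOne μ X) : IsExpOne μ (positiveVersion X) := by
  refine ⟨measurable_positiveVersion h.1, fun x hx => (measure_congr ?_).trans (h.2 x hx)⟩
  filter_upwards [h.ae_pos] with ω hω
  exact congrArg (x < ·) (if_pos hω)

/-- The data from which the jump process is built: a filtration `F` carrying the process `η`, the
intensity function `lam`, and `Exp(1)` clocks `E` and marks `J` of law `ν`, all independent. -/
structure DrivingData {m0 : MeasurableSpace Ω} (μ : Measure Ω) (F : ℝ → MeasurableSpace Ω)
    (L U : ℝ) (ν : Measure ℝ) (η : ℝ → Ω → ℝ) (lam : ℝ → ℝ → ℝ) (E J : ℕ → Ω → ℝ) : Prop where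
  isFiltration : IsFiltration m0 F
  measurableSet_of_null : ∀ s : Set Ω, μ s = 0 → MeasurableSet[F 0] s
  lo_pos : 0 < L
  isDiscrete : IsDiscrete ν
  progMeas : ProgMeas F η
  ae_mem : ∀ᵐ p ∂(μ.prod (volume.restrict (Ici (0 : ℝ)))), η p.2 p.1 ∈ Icc L U
  measurable_lam : ∀ x ∈ FS (atomSet ν), Measurable fun t => lam t x
  ae_lam_mem : ∀ x ∈ FS (atomSet ν), ∀ᵐ t ∂volume.restrict (Ici (0 : ℝ)), lam t x ∈ Icc L U
  isExpOne : ∀ k, IsExpOne μ (E k)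
  measurable_mark : ∀ k, Measurable (J k)
  map_mark : ∀ k, μ.map (J k) = ν
  iIndep : iIndep (noise F E J) μ

namespace DrivingData

variable {m0 : MeasurableSpace Ω} {μ : Measure Ω} {F : ℝ → MeasurableSpace Ω} {L U : ℝ}
  {ν : Measure ℝ} {η : ℝ → Ω → ℝ} {lam : ℝ → ℝ → ℝ} {E J : ℕ → Ω → ℝ}

lemma positiveVersion_clock [IsProbabilityMeasure μ] (D : DrivingData μ F L U ν η lam E J) :
    DrivingData μ F L U ν η lam (fun k => positiveVersion (E k)) J where
  __ := D
  isExpOne k := (D.isExpOne k).positiveVersion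
  iIndep := by
    refine iIndep_of_iIndep_of_le D.iIndep ?_
    rintro (k | k | _)
    · exact (measurable_positiveVersion (comap_measurable (E k))).comap_le
    · exact le_rfl
    · exact le_rfl

variable (D : DrivingData μ F L U ν η lam E J)
include D

lemma lo_le_up : L ≤ U := by
  have : (ae (volume.restrict (Ici (0 : ℝ)))).NeBot := by
    simp only [ae_neBot, ne_eq, Measure.restrict_eq_zero, Real.volume_Ici, ENNReal.top_ne_zero,
      not_false_eq_true]
  obtain ⟨t, hlo, hup⟩ := (D.ae_lam_mem 0 ⟨0, ![], nofun, by simp⟩).exists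
  exact hlo.trans hup

lemma measurable_clock (k : ℕ) : Measurable (E k) := (D.isExpOne k).1

lemma noise_le (i : ℕ ⊕ ℕ ⊕ Unit) : noise F E J i ≤ m0 :=
  InvMarkovJump.noise_le D.isFiltration.2 D.measurable_clock D.measurable_mark i

lemma Finfty_le : Finfty F ≤ m0 := D.noise_le (.inr (.inr ()))

lemma ae_mark_mem : ∀ᵐ ω ∂μ, ∀ k, J k ω ∈ atomSet ν := by
  refine ae_all_iff.2 fun k => ae_of_ae_map (D.measurable_mark k).aemeasurable ?_
  rw [D.map_mark k]
  exact D.isDiscrete.ae_mem_atomSet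

lemma ae_sum_mark_mem : ∀ᵐ ω ∂μ, ∀ k, ∑ j ∈ Finset.range k, J j ω ∈ FS (atomSet ν) :=
  D.ae_mark_mem.mono fun _ hω => sum_range_mem_FS hω

lemma measurable_clamp_Finfty : Measurable[MeasurableSpace.prod inferInstance (Finfty F)]
    fun p : ℝ × Ω => max L (min U (η (max p.1 0) p.2)) := by
  let _ : MeasurableSpace Ω := Finfty F
  exact measurable_const.max (measurable_const.min D.progMeas.measurable_max_zero)

lemma clamp_mem (y : ℝ) : max L (min U y) ∈ Icc L U :=
  ⟨le_max_left _ _, max_le D.lo_le_up (min_le_left _ _)⟩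

open scoped Classical in
/-- The forward equation for the number of jumps: the sites are the partial sums of the marks, and
`η` and `lam` are modified on null sets so as to respect the bounds `L` and `U` everywhere. -/
def forwardProblem : ForwardProblem μ L U where
  site k ω := ∑ j ∈ Finset.range k, J j ω
  weight s ω := max L (min U (η (max s 0) ω))
  lam s x := if x ∈ FS (atomSet ν) then max L (min U (lam s x)) else L
  lo_pos := D.lo_pos
  measurable_site k := Finset.measurable_sum _ fun j _ => D.measurable_mark j
  exists_countable := ⟨FS (atomSet ν), countable_FS D.isDiscrete.countable_atomSet,
    fun k => D.ae_sum_mark_mem.mono fun _ hω => hω k⟩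
  measurable_weight := D.measurable_clamp_Finfty.mono
    (sup_le_sup le_rfl (MeasurableSpace.comap_mono D.Finfty_le)) le_rfl
  weight_mem _ _ := D.clamp_mem _
  measurable_lam := measurable_ite_mem_of_countable
    (countable_FS D.isDiscrete.countable_atomSet)
    (fun x hx => measurable_const.max (measurable_const.min (D.measurable_lam x hx))) L
  lam_mem s x := by
    split_ifs
    exacts [D.clamp_mem _, ⟨le_rfl, D.lo_le_up⟩]

lemma measurable_weight {𝒜 : MeasurableSpace Ω} (h : Finfty F ≤ 𝒜) :
    Measurable[MeasurableSpace.prod inferInstance 𝒜]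
      fun p : ℝ × Ω => D.forwardProblem.weight p.1 p.2 :=
  D.measurable_clamp_Finfty.mono (sup_le_sup le_rfl (MeasurableSpace.comap_mono h)) le_rfl

lemma weight_eq {s : ℝ} (hs : 0 ≤ s) {ω : Ω} (h : η s ω ∈ Icc L U) :
    D.forwardProblem.weight s ω = η s ω := by
  simp [forwardProblem, max_eq_left hs, min_eq_right h.2, max_eq_right h.1]

lemma ae_lam_eq : ∀ᵐ s ∂volume.restrict (Ici (0 : ℝ)), ∀ x ∈ FS (atomSet ν),
    D.forwardProblem.lam s x = lam s x := by
  refine (ae_ball_iff (countable_FS D.isDiscrete.countable_atomSet)).2 fun x hx => ?_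
  filter_upwards [D.ae_lam_mem x hx] with s hs
  simp [forwardProblem, hx, min_eq_right hs.2, max_eq_right hs.1]

lemma ae_ae_mem [SFinite μ] : ∀ᵐ s ∂volume.restrict (Ici (0 : ℝ)), ∀ᵐ ω ∂μ, η s ω ∈ Icc L U :=
  Measure.ae_ae_of_ae_prod (Measure.measurePreserving_swap.quasiMeasurePreserving.ae D.ae_mem)

lemma measurable_site_environment (k : ℕ) :
    Measurable[environment F E J] (D.forwardProblem.site k) :=
  @Finset.measurable_sum _ _ _ _ _ _ (environment F E J) _ (Finset.range k) fun j _ =>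
    measurable_mark_environment j

lemma measurable_site_jumpInfo (k : ℕ) : Measurable[jumpInfo F E J k] (D.forwardProblem.site k) :=
  @Finset.measurable_sum _ _ _ _ _ _ (jumpInfo F E J k) _ (Finset.range k)
    fun _ hj => measurable_mark_jumpInfo (Finset.mem_range.1 hj)

variable [IsProbabilityMeasure μ]

/-- A solution of the nonlinear forward equation. -/
def solution : ℝ × (Ω × ℕ) → ℝ := D.forwardProblem.exists_isSolution.choose

/-- The conditional mean of `η s` given that the left limit at time `s` is `x`, as predicted by the
forward equation. -/
def ratio : ℝ → ℝ → ℝ := D.forwardProblem.ratio D.solution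

/-- The jump rate at time `s` after `k` jumps. -/
def rate (k : ℕ) (ω : Ω) (s : ℝ) : ℝ := D.forwardProblem.intensity D.ratio (s, (ω, k))

/-- The jump times obtained by running the clocks `E` at the rates `DrivingData.rate`. -/
def time : ℕ → Ω → ℝ := jumpTime D.rate E

lemma isSolution : D.forwardProblem.IsSolution D.solution :=
  D.forwardProblem.exists_isSolution.choose_spec

lemma measurable_ratio : Measurable fun p : ℝ × ℝ => D.ratio p.1 p.2 :=
  D.forwardProblem.measurable_ratio D.isSolution.measurable

lemma boundedRate (k : ℕ) (ω : Ω) : BoundedRate (L ^ 2 / U) (U ^ 2 / L) (D.rate k ω) where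
  lo_pos := div_pos (pow_pos D.lo_pos 2) D.forwardProblem.up_pos
  measurable := (D.forwardProblem.measurable_intensity D.measurable_ratio).comp
    (by fun_prop : Measurable fun s : ℝ => (s, (ω, k)))
  lo_le s := (D.forwardProblem.intensity_mem (D.forwardProblem.ratio_mem _) (s, (ω, k))).1
  le_up s := (D.forwardProblem.intensity_mem (D.forwardProblem.ratio_mem _) (s, (ω, k))).2

lemma isMarkedClockModel (hE : ∀ k ω, 0 < E k ω) : IsMarkedClockModel μ (L ^ 2 / U) (U ^ 2 / L) ν
    (jumpInfo F E J) D.rate E J where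
  le _ := iSup₂_le fun i _ => D.noise_le i
  mono := monotone_jumpInfo
  rate := D.boundedRate
  clock_pos := hE
  measurable_rate _ := D.forwardProblem.measurable_intensity_comp
    (D.measurable_site_jumpInfo _) (D.measurable_weight Finfty_le_jumpInfo) D.measurable_ratio
  measurable_clock k := measurable_clock_jumpInfo k.lt_succ_self
  indep := indep_jumpInfo_clock D.noise_le D.iIndep
  isExpOne := D.isExpOne
  measurable_mark k := measurable_mark_jumpInfo k.lt_succ_self
  map_mark := D.map_mark
  indep_mark := indep_mark_jumpInfo_sup_clock D.noise_le D.iIndep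
  measurableSet_of_null s hs :=
    Finfty_le_jumpInfo _ (le_Finfty le_rfl _ (D.measurableSet_of_null s hs))

variable (hE : ∀ k ω, 0 < E k ω)
include hE

lemma strictMono_time (ω : Ω) : StrictMono fun k => D.time k ω :=
  (D.isMarkedClockModel hE).strictMono_jumpTime ω

lemma ae_tendsto_time : ∀ᵐ ω ∂μ, Tendsto (fun k => D.time k ω) atTop atTop :=
  (D.isMarkedClockModel hE).ae_tendsto_jumpTime

lemma measurable_jumpXminus_time (s : ℝ) : Measurable (jumpXminus D.time J s) :=
  measurable_jumpXminus (D.isMarkedClockModel hE).measurable_jumpTime' D.measurable_mark s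

lemma ae_ratio_mul_measureReal_jumpXminus_eq : ∀ᵐ s ∂volume.restrict (Ioi 0), ∀ x,
    D.ratio s x * μ.real {ω | jumpXminus D.time J s ω = x} =
      ∫ ω in {ω | jumpXminus D.time J s ω = x}, D.forwardProblem.weight s ω ∂μ := by
  refine D.isSolution.ae_ratio_mul_measureReal_eq (𝒞 := environment F E J)
    (D.isMarkedClockModel hE).toIsClockModel (iSup₂_le fun i _ => D.noise_le i)
    (indep_environment_clocks D.noise_le D.iIndep)
    (fun _ => D.forwardProblem.measurable_intensity_comp (D.measurable_site_environment _)
      (D.measurable_weight Finfty_le_environment) D.measurable_ratio)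
    D.measurable_site_environment
    (fun s => (D.measurable_weight Finfty_le_environment).comp
      (@measurable_prodMk_left _ _ _ (environment F E J) s))
    (D.measurable_jumpXminus_time hE) fun s hs => ?_
  filter_upwards [D.ae_tendsto_time hE] with ω hω
  obtain ⟨k, hlt, hle⟩ := exists_lt_and_le_succ (t := fun k => D.time k ω) hs hω
  exact ⟨k, ⟨hlt, hle⟩, jumpXminus_eq_sum_range (D.strictMono_time hE ω).monotone hlt hle⟩

lemma ae_condExp_eq_ratio : ∀ᵐ s ∂volume.restrict (Ioi 0), ∀ ω,
    jumpXminus D.time J s ω ∈ FS (atomSet ν) →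
      (μ[η s | MeasurableSpace.comap (jumpXminus D.time J s) inferInstance]) ω =
        D.ratio s (jumpXminus D.time J s ω) := by
  filter_upwards [D.ae_ratio_mul_measureReal_jumpXminus_eq hE,
    ae_restrict_of_ae_restrict_of_subset Ioi_subset_Ici_self D.ae_ae_mem,
    ae_restrict_mem measurableSet_Ioi] with s hratio hη hs ω hω
  have weight_ae_eq : D.forwardProblem.weight s =ᵐ[μ] η s :=
    hη.mono fun _ h => D.weight_eq (le_of_lt hs) h
  have integrable_weight : Integrable (D.forwardProblem.weight s) μ :=
    .of_mem_Icc L U (D.forwardProblem.measurable_weight.comp measurable_prodMk_left).aemeasurable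
      (ae_of_all _ (D.forwardProblem.weight_mem s))
  refine condExp_comap_apply_of_mul_measureReal_eq (D.measurable_jumpXminus_time hE s)
    (integrable_weight.congr weight_ae_eq)
    ((D.isMarkedClockModel hE).measure_jumpXminus_eq_ne_zero D.iIndep D.measurable_mark D.map_mark
      hs hω) ((hratio _).trans (integral_congr_ae (ae_restrict_of_ae weight_ae_eq)))

lemma ae_intensity_eq_rate : ∀ᵐ ω ∂μ, ∀ᵐ s ∂volume.restrict (Ioi 0), ∀ k,
    D.time k ω < s → s ≤ D.time (k + 1) ω →
      η s ω / (μ[η s | MeasurableSpace.comap (jumpXminus D.time J s) inferInstance]) ω *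
        lam s (jumpXminus D.time J s ω) = D.rate k ω s := by
  filter_upwards [Measure.ae_ae_of_ae_prod D.ae_mem, D.ae_sum_mark_mem] with ω hη hFS
  filter_upwards [ae_restrict_of_ae_restrict_of_subset Ioi_subset_Ici_self hη,
    ae_restrict_of_ae_restrict_of_subset Ioi_subset_Ici_self D.ae_lam_eq,
    D.ae_condExp_eq_ratio hE, ae_restrict_mem measurableSet_Ioi] with s hηs hlam hcond hs k hlt hle
  have hX : jumpXminus D.time J s ω = D.forwardProblem.site k ω :=
    jumpXminus_eq_sum_range (D.strictMono_time hE ω).monotone hlt hle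
  have hXFS : jumpXminus D.time J s ω ∈ FS (atomSet ν) := hX ▸ hFS k
  rw [hcond ω hXFS, ← hlam _ hXFS, ← D.weight_eq (le_of_lt hs) hηs, hX, div_mul_eq_mul_div]
  rfl

omit hE in
lemma le_jumpFiltration (t : ℝ) : F t ≤ jumpFiltration m0 (jumpInfo F E J) D.time t := by
  rcases lt_or_ge t 0 with ht | ht
  · rw [jumpFiltration_of_neg ht]
    exact D.isFiltration.2 t
  · rw [jumpFiltration_of_nonneg ht]
    exact fun A hA => ⟨D.isFiltration.2 t A hA, fun k =>
      ⟨A, Finfty_le_jumpInfo _ (le_Finfty ht A hA), fun _ _ => Iff.rfl⟩⟩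

lemma ae_jumpX_mem_FS : ∀ᵐ ω ∂μ, ∀ t : ℝ, 0 ≤ t → jumpX D.time J t ω ∈ FS (atomSet ν) := by
  filter_upwards [D.ae_tendsto_time hE, D.ae_sum_mark_mem] with ω hω hFS t ht
  obtain ⟨k, hle, hlt⟩ := exists_le_and_lt_succ (t := fun k => D.time k ω) ht hω
  rw [jumpX_eq_sum_range (D.strictMono_time hE ω).monotone hle hlt]
  exact hFS k

lemma jumpX_zero (ω : Ω) : jumpX D.time J 0 ω = 0 :=
  jumpX_eq_sum_range (k := 0) (D.strictMono_time hE ω).monotone le_rfl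
    (D.strictMono_time hE ω one_pos)

lemma measurable_jumpX {t : ℝ} (ht : 0 ≤ t) :
    Measurable[jumpFiltration m0 (jumpInfo F E J) D.time t] (jumpX D.time J t) := by
  refine (D.isMarkedClockModel hE).adapted_of_eq_before_jump ht
    (Z := fun k ω => ∑ j ∈ Finset.range k, if D.time (j + 1) ω ≤ t then J j ω else 0)
    (fun k => ?_) fun _ ω => jumpX_eq_sum_range_ite (D.strictMono_time hE ω).monotone
  exact @Finset.measurable_sum _ _ _ _ _ _ (jumpInfo F E J k) _ _ fun j hj =>
    ((D.isMarkedClockModel hE).measurable_jump measurable_id j t).mono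
      (monotone_jumpInfo (Finset.mem_range.1 hj)) le_rfl

lemma isMartingale_compensated {h : ℝ → ℝ} (hh : Measurable h) (hi : Integrable (h ∘ J 0) μ) :
    IsMartingale μ (jumpFiltration m0 (jumpInfo F E J) D.time) fun t ω =>
      (∑' k : ℕ, if D.time (k + 1) ω ≤ t then h (J k ω) else 0) -
        (∫ x, h x ∂ν) * ∫ s in Ioc 0 t,
          η s ω / (μ[η s | MeasurableSpace.comap (jumpXminus D.time J s) inferInstance]) ω *
            lam s (jumpXminus D.time J s ω) := by
  have S := D.isMarkedClockModel hE
  have hν : Integrable h ν := by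
    rw [← D.map_mark 0]
    exact (integrable_map_measure hh.aestronglyMeasurable (D.measurable_mark 0).aemeasurable).2 hi
  refine (S.isMartingale_tsum_compensatedJump hh hν).congr S.usualConditions fun _ _ => ?_
  filter_upwards [D.ae_tendsto_time hE, D.ae_intensity_eq_rate hE] with ω hT hrate
  exact S.toIsClockModel.jump_sub_setIntegral_eq_tsum_compensatedJump hT
    (ae_restrict_of_ae_restrict_of_subset Ioc_subset_Ioi_self hrate) J h _

end DrivingData

theorem invert_markovian_projection_pure_jump_general {m0 : MeasurableSpace Ω} {μ : Measure Ω}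
    [IsProbabilityMeasure μ] {F : ℝ → MeasurableSpace Ω} {L U : ℝ} {ν : Measure ℝ}
    {η : ℝ → Ω → ℝ} {lam : ℝ → ℝ → ℝ} {E J : ℕ → Ω → ℝ} (D : DrivingData μ F L U ν η lam E J) :
    ∃ (G : ℝ → MeasurableSpace Ω) (τ : ℕ → Ω → ℝ),
      UsualConditions μ G ∧
      (∀ t : ℝ, F t ≤ G t) ∧
      (∀ (k : ℕ) (t : ℝ), MeasurableSet[G t] {ω | τ k ω ≤ t}) ∧
      (∀ ω, τ 0 ω = 0) ∧
      (∀ᵐ ω ∂μ, StrictMono (fun k => τ k ω) ∧ Tendsto (fun k => τ k ω) atTop atTop) ∧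
      (∀ᵐ ω ∂μ, ∀ t : ℝ, 0 ≤ t → jumpX τ J t ω ∈ FS (atomSet ν)) ∧
      (∀ᵐ ω ∂μ, jumpX τ J 0 ω = 0) ∧
      (∀ t : ℝ, 0 ≤ t → Measurable[G t] (jumpX τ J t)) ∧
      ∀ h : ℝ → ℝ, Measurable h → Integrable (fun ω => h (J 0 ω)) μ →
        IsMartingale μ G (fun t ω =>
          (∑' k : ℕ, if τ (k + 1) ω ≤ t then h (J k ω) else 0) -
            (∫ x, h x ∂ν) *
              ∫ s in Set.Ioc 0 t,
                η s ω /
                  (μ[η s | MeasurableSpace.comap (jumpXminus τ J s) inferInstance]) ω *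
                  lam s (jumpXminus τ J s ω)) := by
  have D' := D.positiveVersion_clock
  have hE : ∀ k ω, 0 < positiveVersion (E k) ω := fun k => positiveVersion_pos (E k)
  have S := D'.isMarkedClockModel hE
  refine ⟨jumpFiltration m0 (jumpInfo F _ J) D'.time, D'.time, S.usualConditions,
    D'.le_jumpFiltration, S.measurableSet_jumpTime_le, fun _ => rfl, ?_, D'.ae_jumpX_mem_FS hE,
    ae_of_all _ (D'.jumpX_zero hE), fun _ => D'.measurable_jumpX hE,
    fun _ => D'.isMartingale_compensated hE⟩
  filter_upwards [D'.ae_tendsto_time hE] with ω hω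
  exact ⟨D'.strictMono_time hE ω, hω⟩

/-- Inverting the Markovian projection for pure jump processes with a
general discrete jump size distribution `ν`: there exist an enlarged filtration `G` satisfying
the usual conditions and a `G`-adapted pure jump process `X_t = Σ_k J_k·1_{τ_k ≤ t}` starting
at `0`, taking values in `FS(Atom(ν))`, whose jump measure has `G`-compensator
`(η_t / E[η_t | X_{t-}]) λ(t, X_{t-}) ν(dξ) dt`; equivalently, for every measurable `h` with
`h(J_1)` integrable, the compensated process below is a `G`-martingale. -/
theorem invert_markovian_projection_pure_jump
    {m0 : MeasurableSpace Ω} (μ : Measure Ω) [IsProbabilityMeasure μ]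
    (F : ℝ → MeasurableSpace Ω) (hUC : UsualConditions μ F)
    (L U : ℝ) (hL : 0 < L) (hLU : L < U)
    (ν : Measure ℝ) [IsProbabilityMeasure ν]
    (hdiscrete : IsDiscrete ν) (hν0 : ν {(0:ℝ)} = 0)
    (hνint : Integrable (fun x : ℝ => x) ν)
    (η : ℝ → Ω → ℝ) (hη_prog : ProgMeas F η)
    (hη_bdd : ∀ᵐ p ∂(μ.prod (volume.restrict (Set.Ici (0:ℝ)))),
      L ≤ η p.2 p.1 ∧ η p.2 p.1 ≤ U)
    (α : ℝ) (hα : 0 < α ∧ α ≤ 1)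
    (hη_holder : ∀ T : ℝ, 0 < T → ∃ CT : ℝ, 0 < CT ∧
      ∀ s ∈ Set.Icc (0:ℝ) T, ∀ t ∈ Set.Icc (0:ℝ) T,
        ∫ ω, |η t ω - η s ω| ∂μ ≤ CT * |t - s| ^ α)
    (lam : ℝ → ℝ → ℝ) (hlam_meas : ∀ x ∈ FS (atomSet ν), Measurable (fun t => lam t x))
    (hlam_bdd : ∀ x ∈ FS (atomSet ν), ∀ᵐ t ∂(volume.restrict (Set.Ici (0:ℝ))),
      L ≤ lam t x ∧ lam t x ≤ U)
    (E J : ℕ → Ω → ℝ)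
    (hE : ∀ k, IsExpOne μ (E k))
    (hJmeas : ∀ k, Measurable (J k))
    (hJlaw : ∀ k, Measure.map (J k) μ = ν)
    (hindep : iIndep (fun i : ℕ ⊕ ℕ ⊕ Unit =>
      Sum.elim (fun k => MeasurableSpace.comap (E k) inferInstance)
        (Sum.elim (fun k => MeasurableSpace.comap (J k) inferInstance)
          (fun _ => Finfty F)) i) μ) :
    ∃ (G : ℝ → MeasurableSpace Ω) (τ : ℕ → Ω → ℝ),
      UsualConditions μ G ∧
      (∀ t : ℝ, F t ≤ G t) ∧
      (∀ (k : ℕ) (t : ℝ), MeasurableSet[G t] {ω | τ k ω ≤ t}) ∧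
      (∀ ω, τ 0 ω = 0) ∧
      (∀ᵐ ω ∂μ, StrictMono (fun k => τ k ω) ∧ Tendsto (fun k => τ k ω) atTop atTop) ∧
      (∀ᵐ ω ∂μ, ∀ t : ℝ, 0 ≤ t → jumpX τ J t ω ∈ FS (atomSet ν)) ∧
      (∀ᵐ ω ∂μ, jumpX τ J 0 ω = 0) ∧
      (∀ t : ℝ, 0 ≤ t → Measurable[G t] (jumpX τ J t)) ∧
      ∀ h : ℝ → ℝ, Measurable h → Integrable (fun ω => h (J 0 ω)) μ →
        IsMartingale μ G (fun t ω =>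
          (∑' k : ℕ, if τ (k + 1) ω ≤ t then h (J k ω) else 0) -
            (∫ x, h x ∂ν) *
              ∫ s in Set.Ioc 0 t,
                η s ω /
                  (μ[η s | MeasurableSpace.comap (jumpXminus τ J s) inferInstance]) ω *
                  lam s (jumpXminus τ J s ω)) := by
  exact invert_markovian_projection_pure_jump_general ⟨hUC.1, hUC.2.2, hL, hdiscrete, hη_prog,
    hη_bdd, hlam_meas, hlam_bdd, hE, hJmeas, hJlaw, hindep⟩

end InvMarkovJump
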